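/- Let N ≥ 1, p, q ≥ 0 with pq > 1, and set r₁* = (N/2)(pq−1)/(p+1), r₂* = (N/2)(pq−1)/(q+1). Let ℓ* ≥ 1 satisfy ℓ* · min{r₁*, r₂*} ≥ 1. Let 0 < T < ∞ and let (u,v) be the minimal solution of the system (S) on ℝ^N × (0,T), and assume limsup_{t→T} ( ‖u(t)‖_{L^∞(ℝ^N)} + ‖v(t)‖_{L^∞(ℝ^N)} ) = ∞. Set ρ(t) = (T−t)^{1/2}. Then for every r₁ ∈ (ℓ* r₁*, ∞] and r₂ ∈ (ℓ* r₂*, ∞] there exists a constant c₁ > 0 such that liminf_{t→T} { (T−t)^{(N/2)(1/r₁* − 1/r₁)} |||u(t)|||_{r₁,ρ(t)} + (T−t)^{(N/2)(1/r₂* − 1/r₂)} |||v(t)|||_{r₂,ρ(t)} } ≥ c₁, where 1/∞ is interpreted as 0. -/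

import Mathlib

open MeasureTheory ENNReal Filter

noncomputable section

/-- Euclidean space `ℝ^N`. -/
abbrev Euc (N : ℕ) := EuclideanSpace ℝ (Fin N)

/-- The heat semigroup applied to a (nonnegative) function `φ` on `ℝ^N`, with values in `[0,∞]`:
`[S(t)φ](x) = ∫ (4πt)^{-N/2} exp(-|x-y|²/(4t)) φ(y) dy`. -/
noncomputable def heatS (N : ℕ) (t : ℝ) (φ : Euc N → ℝ) (x : Euc N) : ℝ≥0∞ :=
  ∫⁻ y, ENNReal.ofReal
    ((4 * Real.pi * t) ^ (-(N : ℝ) / 2) * Real.exp (-‖x - y‖ ^ 2 / (4 * t)) * φ y)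

/-- The `L^∞` norm of `S(t)φ` on `ℝ^N`. -/
noncomputable def heatSup (N : ℕ) (t : ℝ) (φ : Euc N → ℝ) : ℝ≥0∞ :=
  essSup (heatS N t φ) volume

/-- The `L^{r,∞}(E)` quasinorm: for `1 < r < ∞` it is
`sup_{λ>0} λ |{x ∈ E : |f x| > λ}|^{1/r}`; for `r = 1` (resp. `r = ∞`)
it is the usual `L¹(E)` (resp. `L^∞(E)`) norm. -/
noncomputable def wnorm (N : ℕ) (r : ℝ≥0∞) (f : Euc N → ℝ) (E : Set (Euc N)) : ℝ≥0∞ :=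
  if r = 1 then ∫⁻ x in E, ENNReal.ofReal |f x|
  else if r = ⊤ then essSup (fun x => ENNReal.ofReal |f x|) (volume.restrict E)
  else ⨆ (l : ℝ) (_ : 0 < l), ENNReal.ofReal l * (volume {x ∈ E | l < |f x|}) ^ (1 / r.toReal)

/-- The uniformly local quasinorm `|||f|||_{r,ρ} = sup_x ‖f‖_{L^{r,∞}(B(x,ρ))}`
(for `r = ∞` it is the `L^∞(ℝ^N)` norm). -/
noncomputable def ulocNorm (N : ℕ) (r : ℝ≥0∞) (ρ : ℝ) (f : Euc N → ℝ) : ℝ≥0∞ :=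
  if r = ⊤ then essSup (fun x => ENNReal.ofReal |f x|) volume
  else ⨆ x : Euc N, wnorm N r f (Metric.ball x ρ)

/-- `u ∈ L^∞(τ, T-τ; L^∞(ℝ^N))` for every `τ ∈ (0, T/2)`. -/
def LocBdd (N : ℕ) (T : ℝ≥0∞) (u : Euc N → ℝ → ℝ) : Prop :=
  ∀ τ : ℝ, 0 < τ → ENNReal.ofReal (2 * τ) < T →
    ∃ M : ℝ, ∀ t : ℝ, τ ≤ t → ENNReal.ofReal (t + τ) ≤ T →
      ∀ᵐ x ∂(volume : Measure (Euc N)), |u x t| ≤ M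

/-- Regularity requirements on a pair `(u,v)`: nonnegativity, joint measurability and
uniform boundedness away from `t = 0` and `t = T`. -/
def PairRegular (N : ℕ) (T : ℝ≥0∞) (u v : Euc N → ℝ → ℝ) : Prop :=
  (∀ x t, 0 ≤ u x t) ∧ (∀ x t, 0 ≤ v x t) ∧
  Measurable (Function.uncurry u) ∧ Measurable (Function.uncurry v) ∧
  LocBdd N T u ∧ LocBdd N T v

/-- The Duhamel identities for the system (S) `∂ₜu = Δu + v^p`, `∂ₜv = Δv + u^q` at time `t`. -/
def DuhamelSys (N : ℕ) (p q : ℝ) (u₀ v₀ : Euc N → ℝ) (u v : Euc N → ℝ → ℝ) (t : ℝ) : Prop :=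
  (∀ᵐ x ∂(volume : Measure (Euc N)), ENNReal.ofReal (u x t) =
      heatS N t u₀ x + ∫⁻ s in Set.Ioo 0 t, heatS N (t - s) (fun y => v y s ^ p) x) ∧
  (∀ᵐ x ∂(volume : Measure (Euc N)), ENNReal.ofReal (v x t) =
      heatS N t v₀ x + ∫⁻ s in Set.Ioo 0 t, heatS N (t - s) (fun y => u y s ^ q) x)

/-- The Duhamel inequalities (`≥`, with finite left-hand side) for the system (S) at time `t`. -/
def DuhamelSuperSys (N : ℕ) (p q : ℝ) (u₀ v₀ : Euc N → ℝ) (u v : Euc N → ℝ → ℝ) (t : ℝ) : Prop :=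
  (∀ᵐ x ∂(volume : Measure (Euc N)),
      heatS N t u₀ x + (∫⁻ s in Set.Ioo 0 t, heatS N (t - s) (fun y => v y s ^ p) x) ≤
        ENNReal.ofReal (u x t)) ∧
  (∀ᵐ x ∂(volume : Measure (Euc N)),
      heatS N t v₀ x + (∫⁻ s in Set.Ioo 0 t, heatS N (t - s) (fun y => u y s ^ q) x) ≤
        ENNReal.ofReal (v x t))

/-- `(u,v)` is a solution of the system (S) on `ℝ^N × (0,T)`. -/
def IsSolSys (N : ℕ) (p q : ℝ) (u₀ v₀ : Euc N → ℝ) (T : ℝ≥0∞) (u v : Euc N → ℝ → ℝ) : Prop :=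
  PairRegular N T u v ∧
  ∀ t : ℝ, 0 < t → ENNReal.ofReal t < T → DuhamelSys N p q u₀ v₀ u v t

/-- `(u,v)` is a supersolution of the system (S) on `ℝ^N × (0,T)`. -/
def IsSuperSys (N : ℕ) (p q : ℝ) (u₀ v₀ : Euc N → ℝ) (T : ℝ≥0∞) (u v : Euc N → ℝ → ℝ) : Prop :=
  PairRegular N T u v ∧
  ∀ t : ℝ, 0 < t → ENNReal.ofReal t < T → DuhamelSuperSys N p q u₀ v₀ u v t

/-- `(u,v)` is the minimal solution of the system (S) on `ℝ^N × (0,T)`. -/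
def IsMinSolSys (N : ℕ) (p q : ℝ) (u₀ v₀ : Euc N → ℝ) (T : ℝ≥0∞)
    (u v : Euc N → ℝ → ℝ) : Prop :=
  IsSolSys N p q u₀ v₀ T u v ∧
  ∀ u' v' : Euc N → ℝ → ℝ, IsSolSys N p q u₀ v₀ T u' v' →
    ∀ t : ℝ, 0 < t → ENNReal.ofReal t < T →
      (∀ᵐ x ∂(volume : Measure (Euc N)), u x t ≤ u' x t) ∧
      (∀ᵐ x ∂(volume : Measure (Euc N)), v x t ≤ v' x t)

/-- Regularity requirements on a scalar function `w`. -/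
def ScalarRegular (N : ℕ) (T : ℝ≥0∞) (w : Euc N → ℝ → ℝ) : Prop :=
  (∀ x t, 0 ≤ w x t) ∧ Measurable (Function.uncurry w) ∧ LocBdd N T w

/-- The Duhamel identity for the scalar problem (E) `∂ₜw = Δw + α w^A + β w^B` at time `t`. -/
def DuhamelScalar (N : ℕ) (α β A B : ℝ) (w₀ : Euc N → ℝ) (w : Euc N → ℝ → ℝ) (t : ℝ) : Prop :=
  ∀ᵐ x ∂(volume : Measure (Euc N)), ENNReal.ofReal (w x t) =
    heatS N t w₀ x +
      ∫⁻ s in Set.Ioo 0 t, heatS N (t - s) (fun y => α * w y s ^ A + β * w y s ^ B) x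

/-- The Duhamel inequality (`≥`, with finite left-hand side) for the scalar problem (E). -/
def DuhamelSuperScalar (N : ℕ) (α β A B : ℝ) (w₀ : Euc N → ℝ) (w : Euc N → ℝ → ℝ)
    (t : ℝ) : Prop :=
  ∀ᵐ x ∂(volume : Measure (Euc N)),
    heatS N t w₀ x +
        (∫⁻ s in Set.Ioo 0 t, heatS N (t - s) (fun y => α * w y s ^ A + β * w y s ^ B) x) ≤
      ENNReal.ofReal (w x t)

/-- `w` is a solution of the scalar problem (E) on `ℝ^N × (0,T)`. -/
def IsSolScalar (N : ℕ) (α β A B : ℝ) (w₀ : Euc N → ℝ) (T : ℝ≥0∞)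
    (w : Euc N → ℝ → ℝ) : Prop :=
  ScalarRegular N T w ∧
  ∀ t : ℝ, 0 < t → ENNReal.ofReal t < T → DuhamelScalar N α β A B w₀ w t

/-- `w` is a supersolution of the scalar problem (E) on `ℝ^N × (0,T)`. -/
def IsSuperScalar (N : ℕ) (α β A B : ℝ) (w₀ : Euc N → ℝ) (T : ℝ≥0∞)
    (w : Euc N → ℝ → ℝ) : Prop :=
  ScalarRegular N T w ∧
  ∀ t : ℝ, 0 < t → ENNReal.ofReal t < T → DuhamelSuperScalar N α β A B w₀ w t

/-- The Duhamel identities for the strongly coupled system (SC)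
`∂ₜu = Δu + u^{p₁} v^{p₂}`, `∂ₜv = Δv + u^{q₁} v^{q₂}` at time `t`. -/
def DuhamelSC (N : ℕ) (p₁ p₂ q₁ q₂ : ℝ) (u₀ v₀ : Euc N → ℝ) (u v : Euc N → ℝ → ℝ)
    (t : ℝ) : Prop :=
  (∀ᵐ x ∂(volume : Measure (Euc N)), ENNReal.ofReal (u x t) =
      heatS N t u₀ x +
        ∫⁻ s in Set.Ioo 0 t, heatS N (t - s) (fun y => u y s ^ p₁ * v y s ^ p₂) x) ∧
  (∀ᵐ x ∂(volume : Measure (Euc N)), ENNReal.ofReal (v x t) =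
      heatS N t v₀ x +
        ∫⁻ s in Set.Ioo 0 t, heatS N (t - s) (fun y => u y s ^ q₁ * v y s ^ q₂) x)

/-- `(u,v)` is a solution of the strongly coupled system (SC) on `ℝ^N × (0,T)`. -/
def IsSolSC (N : ℕ) (p₁ p₂ q₁ q₂ : ℝ) (u₀ v₀ : Euc N → ℝ) (T : ℝ≥0∞)
    (u v : Euc N → ℝ → ℝ) : Prop :=
  PairRegular N T u v ∧
  ∀ t : ℝ, 0 < t → ENNReal.ofReal t < T → DuhamelSC N p₁ p₂ q₁ q₂ u₀ v₀ u v t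


/-! ### The heat kernel with values in `[0,∞]` -/

def gk (N : ℕ) (t : ℝ) (z : Euc N) : ℝ≥0∞ :=
  ENNReal.ofReal ((4 * Real.pi * t) ^ (-(N : ℝ) / 2) * Real.exp (-‖z‖ ^ 2 / (4 * t)))

def hE (N : ℕ) (t : ℝ) (φ : Euc N → ℝ≥0∞) (x : Euc N) : ℝ≥0∞ :=
  ∫⁻ y, gk N t (x - y) * φ y

lemma heatS_eq {N : ℕ} {t : ℝ} (ht : 0 < t) (φ : Euc N → ℝ) (x : Euc N) :
    heatS N t φ x = hE N t (fun y => ENNReal.ofReal (φ y)) x := by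
  unfold heatS hE gk
  refine lintegral_congr fun y => ?_
  rw [ENNReal.ofReal_mul (by positivity)]

lemma measurable_gk (N : ℕ) : Measurable (fun a : ℝ × Euc N => gk N a.1 a.2) := by
  unfold gk
  apply Measurable.ennreal_ofReal
  apply Measurable.mul
  · exact (measurable_const.mul measurable_fst).pow_const _
  · apply Real.measurable_exp.comp
    exact ((measurable_snd.norm.pow_const 2).neg).div (measurable_const.mul measurable_fst)

lemma measurable_gk_sub (N : ℕ) (t : ℝ) :
    Measurable (fun a : Euc N × Euc N => gk N t (a.1 - a.2)) := by
  unfold gk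
  fun_prop

lemma measurable_gk_sub_right (N : ℕ) (t : ℝ) (x : Euc N) :
    Measurable (fun y : Euc N => gk N t (x - y)) := by
  unfold gk
  fun_prop

lemma measurable_gk_sub_left (N : ℕ) (t : ℝ) (x : Euc N) :
    Measurable (fun y : Euc N => gk N t (y - x)) := by
  unfold gk
  fun_prop

lemma measurable_gk_mul {N : ℕ} (t : ℝ) (x : Euc N) {φ : Euc N → ℝ≥0∞} (hφ : Measurable φ) :
    Measurable (fun y : Euc N => gk N t (x - y) * φ y) :=
  Measurable.mul (measurable_gk_sub_right N t x) hφ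

lemma hE_mono_ae {N : ℕ} {t : ℝ} {φ ψ : Euc N → ℝ≥0∞} (h : ∀ᵐ y, φ y ≤ ψ y) (x : Euc N) :
    hE N t φ x ≤ hE N t ψ x := by
  refine lintegral_mono_ae ?_
  filter_upwards [h] with y hy
  gcongr

lemma hE_congr_ae {N : ℕ} {t : ℝ} {φ ψ : Euc N → ℝ≥0∞} (h : ∀ᵐ y, φ y = ψ y) (x : Euc N) :
    hE N t φ x = hE N t ψ x := by
  refine lintegral_congr_ae ?_
  filter_upwards [h] with y hy
  simp only [hy]

lemma hE_const_mul {N : ℕ} {t : ℝ} (c : ℝ≥0∞) {φ : Euc N → ℝ≥0∞} (hφ : Measurable φ) (x : Euc N) :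
    hE N t (fun y => c * φ y) x = c * hE N t φ x := by
  unfold hE
  rw [← lintegral_const_mul c (measurable_gk_mul t x hφ)]
  refine lintegral_congr fun y => ?_
  ring

lemma hE_add {N : ℕ} {t : ℝ} {φ ψ : Euc N → ℝ≥0∞} (hφ : Measurable φ) (x : Euc N) :
    hE N t (fun y => φ y + ψ y) x = hE N t φ x + hE N t ψ x := by
  unfold hE
  rw [← lintegral_add_left (measurable_gk_mul t x hφ)]
  refine lintegral_congr fun y => ?_
  ring

lemma measurable_hE_joint {N : ℕ} {F : Euc N → ℝ → ℝ≥0∞} (hF : Measurable (Function.uncurry F)) :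
    Measurable (fun a : (Euc N × ℝ) × ℝ => hE N (a.1.2 - a.2) (fun y => F y a.2) a.1.1) := by
  unfold hE
  apply Measurable.lintegral_prod_right'
    (f := fun b : ((Euc N × ℝ) × ℝ) × Euc N =>
      gk N (b.1.1.2 - b.1.2) (b.1.1.1 - b.2) * F b.2 b.1.2)
  apply Measurable.mul
  · exact (measurable_gk N).comp (Measurable.prodMk (by fun_prop) (by fun_prop))
  · exact hF.comp (Measurable.prodMk (by fun_prop) (by fun_prop))

lemma measurable_hE {N : ℕ} {φ : Euc N → ℝ≥0∞} (hφ : Measurable φ) :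
    Measurable (fun a : Euc N × ℝ => hE N a.2 φ a.1) := by
  have h1 := measurable_hE_joint (N := N) (F := fun y _ => φ y) (hφ.comp measurable_fst)
  have h2 : Measurable (fun a : Euc N × ℝ => (a, (0 : ℝ))) := measurable_id.prodMk measurable_const
  have := h1.comp h2
  simpa [Function.comp_def] using this

lemma measurable_hE_x {N : ℕ} {φ : Euc N → ℝ≥0∞} (hφ : Measurable φ) (t : ℝ) :
    Measurable (fun x : Euc N => hE N t φ x) :=
  (measurable_hE hφ).comp (measurable_id.prodMk measurable_const)

lemma gauss_lint (N : ℕ) {b : ℝ} (hb : 0 < b) :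
    ∫⁻ v : Euc N, ENNReal.ofReal (Real.exp (-b * ‖v‖ ^ 2)) =
      ENNReal.ofReal ((Real.pi / b) ^ ((N : ℝ) / 2)) := by
  have h := GaussianFourier.integral_rexp_neg_mul_sq_norm (V := Euc N) hb
  rw [finrank_euclideanSpace_fin] at h
  rw [← h, ofReal_integral_eq_lintegral_ofReal]
  · apply not_imp_comm.1 integral_undef
    rw [h]
    have := Real.pi_pos
    positivity
  · exact Filter.Eventually.of_forall fun v => (Real.exp_pos _).le

lemma gk_lint (N : ℕ) {t : ℝ} (ht : 0 < t) (x : Euc N) :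
    ∫⁻ y : Euc N, gk N t (x - y) = 1 := by
  rw [lintegral_sub_left_eq_self (fun y => gk N t y) x]
  unfold gk
  have h1 : ∀ v : Euc N, ENNReal.ofReal
      ((4 * Real.pi * t) ^ (-(N : ℝ) / 2) * Real.exp (-‖v‖ ^ 2 / (4 * t))) =
      ENNReal.ofReal ((4 * Real.pi * t) ^ (-(N : ℝ) / 2)) *
        ENNReal.ofReal (Real.exp (-(1 / (4 * t)) * ‖v‖ ^ 2)) := by
    intro v
    rw [ENNReal.ofReal_mul (by positivity)]
    congr 3
    field_simp
  simp_rw [h1]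
  rw [lintegral_const_mul' _ _ ENNReal.ofReal_ne_top, gauss_lint N (by positivity),
    ← ENNReal.ofReal_mul (by positivity)]
  have : Real.pi / (1 / (4 * t)) = 4 * Real.pi * t := by field_simp
  rw [this, ← Real.rpow_add (by positivity)]
  simp [neg_div]

/-- Chapman–Kolmogorov identity. -/
lemma gk_conv (N : ℕ) {t s : ℝ} (ht : 0 < t) (hs : 0 < s) (x w : Euc N) :
    ∫⁻ y : Euc N, gk N t (x - y) * gk N s (y - w) = gk N (t + s) (x - w) := by
  set c : Euc N := (t + s)⁻¹ • (s • x + t • w) with hc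
  set b : ℝ := (t + s) / (4 * t * s) with hb
  have hbpos : 0 < b := by positivity
  have hpi := Real.pi_pos
  have key : ∀ y : Euc N, -‖x - y‖ ^ 2 / (4 * t) + -‖y - w‖ ^ 2 / (4 * s) =
      -‖x - w‖ ^ 2 / (4 * (t + s)) + -b * ‖y - c‖ ^ 2 := by
    intro y
    have e1 : ‖x - y‖ ^ 2 = inner ℝ x x - 2 * inner ℝ x y + inner ℝ y y := by
      rw [@norm_sub_sq_real, real_inner_self_eq_norm_sq, real_inner_self_eq_norm_sq]
    have e2 : ‖y - w‖ ^ 2 = inner ℝ y y - 2 * inner ℝ y w + inner ℝ w w := by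
      rw [@norm_sub_sq_real, real_inner_self_eq_norm_sq, real_inner_self_eq_norm_sq]
    have e3 : ‖x - w‖ ^ 2 = inner ℝ x x - 2 * inner ℝ x w + inner ℝ w w := by
      rw [@norm_sub_sq_real, real_inner_self_eq_norm_sq, real_inner_self_eq_norm_sq]
    have e4 : ‖y - c‖ ^ 2 = inner ℝ y y - 2 * ((t + s)⁻¹ * (s * inner ℝ x y + t * inner ℝ y w)) +
        (t + s)⁻¹ ^ 2 * (s ^ 2 * inner ℝ x x + 2 * s * t * inner ℝ x w + t ^ 2 * inner ℝ w w) := by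
      rw [@norm_sub_sq_real, hc, norm_smul, mul_pow, @norm_add_sq_real]
      simp only [inner_smul_right, inner_add_right, real_inner_smul_left, norm_smul, mul_pow,
        real_inner_self_eq_norm_sq, Real.norm_eq_abs, sq_abs, real_inner_comm x y]
      ring
    rw [e1, e2, e3, e4, hb]
    field_simp
    ring
  have h1 : ∀ y : Euc N, gk N t (x - y) * gk N s (y - w) =
      ENNReal.ofReal ((4 * Real.pi * t) ^ (-(N : ℝ) / 2) * (4 * Real.pi * s) ^ (-(N : ℝ) / 2) *
        Real.exp (-‖x - w‖ ^ 2 / (4 * (t + s)))) *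
        ENNReal.ofReal (Real.exp (-b * ‖y - c‖ ^ 2)) := by
    intro y
    unfold gk
    rw [← ENNReal.ofReal_mul (by positivity), ← ENNReal.ofReal_mul (by positivity)]
    congr 1
    have := congrArg Real.exp (key y)
    rw [Real.exp_add, Real.exp_add] at this
    linear_combination (4 * Real.pi * t) ^ (-(N : ℝ) / 2) * (4 * Real.pi * s) ^ (-(N : ℝ) / 2) * this
  simp_rw [h1]
  rw [lintegral_const_mul' _ _ ENNReal.ofReal_ne_top,
    lintegral_sub_right_eq_self (fun y => ENNReal.ofReal (Real.exp (-b * ‖y‖ ^ 2))) c,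
    gauss_lint N hbpos, ← ENNReal.ofReal_mul (by positivity)]
  unfold gk
  congr 1
  have h2 : (4 * Real.pi * t) ^ (-(N : ℝ) / 2) * (4 * Real.pi * s) ^ (-(N : ℝ) / 2) *
      (Real.pi / b) ^ ((N : ℝ) / 2) = (4 * Real.pi * (t + s)) ^ (-(N : ℝ) / 2) := by
    have e : Real.pi / b = (b / Real.pi)⁻¹ := by rw [inv_div]
    rw [e, Real.inv_rpow (by positivity), ← Real.rpow_neg (by positivity), ← neg_div,
      ← Real.mul_rpow (by positivity) (by positivity), ← Real.mul_rpow (by positivity) (by positivity)]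
    congr 1
    rw [hb]
    field_simp
  rw [← h2]
  ring

/-- Semigroup property. -/
lemma hE_hE {N : ℕ} {t s : ℝ} (ht : 0 < t) (hs : 0 < s) {φ : Euc N → ℝ≥0∞} (hφ : Measurable φ)
    (x : Euc N) : hE N t (hE N s φ) x = hE N (t + s) φ x := by
  unfold hE
  have h1 : ∀ y : Euc N, gk N t (x - y) * ∫⁻ w, gk N s (y - w) * φ w =
      ∫⁻ w, gk N t (x - y) * (gk N s (y - w) * φ w) := fun y =>
    (lintegral_const_mul _ (measurable_gk_mul s y hφ)).symm
  simp_rw [h1]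
  rw [lintegral_lintegral_swap]
  · refine lintegral_congr fun w => ?_
    rw [← gk_conv N ht hs x w, ← lintegral_mul_const]
    · refine lintegral_congr fun y => ?_
      ring
    · exact measurable_gk_mul t x (measurable_gk_sub_left N s w)
  · apply Measurable.aemeasurable
    have h2 : Measurable (fun a : Euc N × Euc N => gk N t (x - a.1)) :=
      (measurable_gk_sub_right N t x).comp measurable_fst
    have h3 : Measurable (fun a : Euc N × Euc N => φ a.2) := hφ.comp measurable_snd
    exact Measurable.mul h2 (Measurable.mul (measurable_gk_sub N s) h3)

/-- Jensen inequality for concave powers. -/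
lemma hE_rpow_le {N : ℕ} {t m : ℝ} (ht : 0 < t) (hm : 0 < m) (hm1 : m ≤ 1)
    {φ : Euc N → ℝ≥0∞} (hφ : Measurable φ) (x : Euc N) :
    hE N t (fun y => φ y ^ m) x ≤ (hE N t φ x) ^ m := by
  unfold hE
  have h := ENNReal.lintegral_mul_norm_pow_le (μ := (volume : Measure (Euc N)))
    (f := fun y => gk N t (x - y) * φ y) (g := fun y => gk N t (x - y))
    (measurable_gk_mul t x hφ).aemeasurable
    (measurable_gk_sub_right N t x).aemeasurable hm.le (sub_nonneg.2 hm1) (by ring)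
  rw [gk_lint N ht, ENNReal.one_rpow, mul_one] at h
  refine le_trans (le_of_eq (lintegral_congr fun y => ?_)) h
  have e : gk N t (x - y) = gk N t (x - y) ^ m * gk N t (x - y) ^ (1 - m) := by
    rw [← ENNReal.rpow_add_of_nonneg _ _ hm.le (sub_nonneg.2 hm1)]
    simp
  rw [ENNReal.mul_rpow_of_nonneg _ _ hm.le]
  conv_lhs => rw [e]
  ring


/-! ### Smoothing estimates -/

lemma vol_ball (N : ℕ) {t : ℝ} (ht : 0 < t) (z : Euc N) :
    volume (Metric.ball z (Real.sqrt t)) =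
      ENNReal.ofReal (t ^ ((N : ℝ) / 2) * (volume (Metric.ball (0 : Euc N) 1)).toReal) := by
  rw [Measure.addHaar_ball_of_pos _ _ (Real.sqrt_pos.2 ht), finrank_euclideanSpace_fin,
    ENNReal.ofReal_mul (by positivity), ENNReal.ofReal_toReal measure_ball_lt_top.ne]
  congr 2
  rw [Real.sqrt_eq_rpow, ← Real.rpow_natCast, ← Real.rpow_mul ht.le]
  congr 1
  ring

lemma vol_unit_pos (N : ℕ) : 0 < (volume (Metric.ball (0 : Euc N) 1)).toReal :=
  ENNReal.toReal_pos (Metric.measure_ball_pos _ _ one_pos).ne' measure_ball_lt_top.ne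

lemma gk_compare (N : ℕ) {t : ℝ} (ht : 0 < t) (x y z : Euc N) (h : dist y z < Real.sqrt t) :
    gk N t (x - y) ≤
      ENNReal.ofReal (Real.exp (1 / 4) * 2 ^ ((N : ℝ) / 2)) * gk N (2 * t) (x - z) := by
  unfold gk
  rw [← ENNReal.ofReal_mul (by positivity)]
  apply ENNReal.ofReal_le_ofReal
  have hpi := Real.pi_pos
  have e1 : (4 * Real.pi * (2 * t)) ^ (-(N : ℝ) / 2) =
      2 ^ (-(N : ℝ) / 2) * (4 * Real.pi * t) ^ (-(N : ℝ) / 2) := by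
    rw [← Real.mul_rpow (by positivity) (by positivity)]
    congr 1; ring
  have e2 : (2 : ℝ) ^ ((N : ℝ) / 2) * 2 ^ (-(N : ℝ) / 2) = 1 := by
    rw [← Real.rpow_add (by positivity)]
    simp [neg_div]
  have e3 : Real.exp (-‖x - y‖ ^ 2 / (4 * t)) ≤
      Real.exp (1 / 4) * Real.exp (-‖x - z‖ ^ 2 / (4 * (2 * t))) := by
    rw [← Real.exp_add]
    apply Real.exp_le_exp.2
    have h1 : ‖x - z‖ ≤ ‖x - y‖ + ‖y - z‖ := by
      have := norm_add_le (x - y) (y - z)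
      simpa using this
    have h2 : ‖y - z‖ ^ 2 ≤ t := by
      rw [dist_eq_norm] at h
      have := Real.sq_sqrt ht.le
      have h0 := norm_nonneg (y - z)
      nlinarith [Real.sqrt_nonneg t]
    have h3 : ‖x - z‖ ^ 2 ≤ 2 * ‖x - y‖ ^ 2 + 2 * t := by
      have h0 := norm_nonneg (x - z)
      nlinarith [sq_nonneg (‖x - y‖ - ‖y - z‖), norm_nonneg (x - y), norm_nonneg (y - z)]
    have e4 : 1 / 4 + -‖x - z‖ ^ 2 / (4 * (2 * t)) - -‖x - y‖ ^ 2 / (4 * t) =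
      (2 * ‖x - y‖ ^ 2 + 2 * t - ‖x - z‖ ^ 2) / (8 * t) := by
      field_simp; ring
    have : 0 ≤ (2 * ‖x - y‖ ^ 2 + 2 * t - ‖x - z‖ ^ 2) / (8 * t) :=
      div_nonneg (by linarith) (by positivity)
    linarith
  rw [e1]
  calc (4 * Real.pi * t) ^ (-(N : ℝ) / 2) * Real.exp (-‖x - y‖ ^ 2 / (4 * t))
      ≤ (4 * Real.pi * t) ^ (-(N : ℝ) / 2) *
        (Real.exp (1 / 4) * Real.exp (-‖x - z‖ ^ 2 / (4 * (2 * t)))) := by gcongr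
    _ = _ := by linear_combination (-(4 * Real.pi * t) ^ (-(N : ℝ) / 2) *
        (Real.exp (1 / 4) * Real.exp (-‖x - z‖ ^ 2 / (4 * (2 * t))))) * e2

lemma hE_avg_aux (N : ℕ) {t : ℝ} (ht : 0 < t) {φ : Euc N → ℝ≥0∞} (hφ : Measurable φ) (M : ℝ≥0∞)
    (hM : ∀ z, ∫⁻ y in Metric.ball z (Real.sqrt t), φ y ≤ M) (x : Euc N) :
    volume (Metric.ball (0 : Euc N) (Real.sqrt t)) * hE N t φ x ≤
      ENNReal.ofReal (Real.exp (1 / 4) * 2 ^ ((N : ℝ) / 2)) * M := by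
  set D := ENNReal.ofReal (Real.exp (1 / 4) * 2 ^ ((N : ℝ) / 2)) with hD
  have hball : ∀ y : Euc N, volume (Metric.ball (0 : Euc N) (Real.sqrt t)) =
      ∫⁻ z, (Metric.ball y (Real.sqrt t)).indicator (fun _ => (1 : ℝ≥0∞)) z := by
    intro y
    rw [lintegral_indicator_const measurableSet_ball, one_mul, vol_ball N ht, vol_ball N ht]
  unfold hE
  rw [← lintegral_const_mul _ (measurable_gk_mul t x hφ)]
  have hmS : MeasurableSet {a : Euc N × Euc N | dist a.2 a.1 < Real.sqrt t} :=
    measurableSet_lt (measurable_snd.dist measurable_fst) measurable_const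
  calc ∫⁻ y, volume (Metric.ball (0 : Euc N) (Real.sqrt t)) * (gk N t (x - y) * φ y)
      ≤ ∫⁻ y, ∫⁻ z, D * (gk N (2 * t) (x - z) *
          ((Metric.ball y (Real.sqrt t)).indicator (fun _ => (1 : ℝ≥0∞)) z * φ y)) := by
        refine lintegral_mono fun y => ?_
        simp only
        rw [hball y, ← lintegral_mul_const _ (measurable_const.indicator measurableSet_ball)]
        refine lintegral_mono fun z => ?_
        by_cases hz : z ∈ Metric.ball y (Real.sqrt t)
        · simp only [Set.indicator_of_mem hz, one_mul]
          rw [← mul_assoc]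
          gcongr
          exact gk_compare N ht x y z (by rw [dist_comm]; exact hz)
        · simp [Set.indicator_of_notMem hz]
    _ = ∫⁻ z, ∫⁻ y, D * (gk N (2 * t) (x - z) *
          ((Metric.ball y (Real.sqrt t)).indicator (fun _ => (1 : ℝ≥0∞)) z * φ y)) := by
        apply lintegral_lintegral_swap
        apply Measurable.aemeasurable
        have h1 : Measurable (fun a : Euc N × Euc N => gk N (2 * t) (x - a.2)) :=
          (measurable_gk_sub_right N (2 * t) x).comp measurable_snd
        have h2 : Measurable (fun a : Euc N × Euc N => φ a.1) := hφ.comp measurable_fst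
        have h3 : Measurable (fun a : Euc N × Euc N =>
            (Metric.ball a.1 (Real.sqrt t)).indicator (fun _ => (1 : ℝ≥0∞)) a.2) := by
          have : (fun a : Euc N × Euc N =>
            (Metric.ball a.1 (Real.sqrt t)).indicator (fun _ => (1 : ℝ≥0∞)) a.2) =
            {a : Euc N × Euc N | dist a.2 a.1 < Real.sqrt t}.indicator (fun _ => 1) := by
            ext a
            simp only [Set.indicator, Metric.mem_ball, Set.mem_ofPred_eq]
          rw [this]
          exact measurable_const.indicator hmS
        exact measurable_const.mul (Measurable.mul h1 (Measurable.mul h3 h2))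
    _ ≤ ∫⁻ z, D * (gk N (2 * t) (x - z) * M) := by
        refine lintegral_mono fun z => ?_
        have h4 : Measurable (fun y : Euc N =>
            (Metric.ball y (Real.sqrt t)).indicator (fun _ => (1 : ℝ≥0∞)) z * φ y) := by
          have : (fun y : Euc N =>
            (Metric.ball y (Real.sqrt t)).indicator (fun _ => (1 : ℝ≥0∞)) z) =
            (Metric.ball z (Real.sqrt t)).indicator (fun _ => 1) := by
            ext a
            simp only [Set.indicator, Metric.mem_ball, dist_comm]
          exact Measurable.mul (this ▸ measurable_const.indicator measurableSet_ball) hφ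
        simp only
        rw [lintegral_const_mul' _ _ ENNReal.ofReal_ne_top, lintegral_const_mul _ h4]
        gcongr
        refine le_trans (le_of_eq ?_) (hM z)
        rw [← lintegral_indicator measurableSet_ball]
        refine lintegral_congr fun y => ?_
        by_cases hz : dist y z < Real.sqrt t
        · have h5 : y ∈ Metric.ball z (Real.sqrt t) := hz
          have h6 : z ∈ Metric.ball y (Real.sqrt t) := by rw [Metric.mem_ball, dist_comm]; exact hz
          simp [Set.indicator_of_mem h5, Set.indicator_of_mem h6]
        · have h5 : y ∉ Metric.ball z (Real.sqrt t) := hz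
          have h6 : z ∉ Metric.ball y (Real.sqrt t) := by rw [Metric.mem_ball, dist_comm]; exact hz
          simp [Set.indicator_of_notMem h5, Set.indicator_of_notMem h6]
    _ = D * M := by
        rw [lintegral_const_mul' _ _ ENNReal.ofReal_ne_top,
          lintegral_mul_const _ (measurable_gk_sub_right N (2 * t) x), gk_lint N (by positivity),
          one_mul]

lemma hE_avg (N : ℕ) {t M : ℝ} (ht : 0 < t) {φ : Euc N → ℝ≥0∞} (hφ : Measurable φ)
    (hM : ∀ z, ∫⁻ y in Metric.ball z (Real.sqrt t), φ y ≤ ENNReal.ofReal M) (x : Euc N) :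
    hE N t φ x ≤ ENNReal.ofReal (Real.exp (1 / 4) * 2 ^ ((N : ℝ) / 2) /
      (volume (Metric.ball (0 : Euc N) 1)).toReal * t ^ (-((N : ℝ) / 2)) * M) := by
  have h := hE_avg_aux N ht hφ _ hM x
  have hw := vol_unit_pos N
  rw [vol_ball N ht] at h
  have htp : 0 < t ^ ((N : ℝ) / 2) := by positivity
  rw [← ENNReal.ofReal_mul (by positivity)] at h
  have hpos : 0 < t ^ ((N : ℝ) / 2) * (volume (Metric.ball (0 : Euc N) 1)).toReal := by positivity
  rw [mul_comm] at h
  have h2 := (ENNReal.le_div_iff_mul_le (Or.inl (by simpa using hpos))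
    (Or.inl ENNReal.ofReal_ne_top)).2 h
  rw [← ENNReal.ofReal_div_of_pos hpos] at h2
  refine h2.trans (le_of_eq ?_)
  congr 1
  rw [Real.rpow_neg ht.le]
  field_simp

lemma weak_avg {N : ℕ} {r K : ℝ} (hr : 1 < r) (hK : 0 < K) {B : Set (Euc N)}
    (hB0 : 0 < (volume B).toReal) {f : Euc N → ℝ}
    (hf : Measurable f) (hf0 : ∀ x, 0 ≤ f x)
    (h : ∀ l : ℝ, 0 < l → ENNReal.ofReal l * (volume {x ∈ B | l < f x}) ^ (1 / r) ≤
      ENNReal.ofReal K) :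
    ∫⁻ x in B, ENNReal.ofReal (f x) ≤
      ENNReal.ofReal (r / (r - 1) * K * (volume B).toReal ^ (1 - 1 / r)) := by
  set b := (volume B).toReal with hb
  have hr0 : 0 < r := by linarith
  have hr1 : 0 < r - 1 := by linarith
  have hBtop : volume B ≠ ⊤ := by
    intro h0; rw [hb, h0] at hB0; simp at hB0
  set L : ℝ := K * b ^ (-(1 / r)) with hL
  have hLpos : 0 < L := by positivity
  rw [lintegral_eq_lintegral_meas_lt _ (Filter.Eventually.of_forall hf0) hf.aemeasurable]
  have hsub : Set.Ioi (0 : ℝ) = Set.Ioc 0 L ∪ Set.Ioi L := (Set.Ioc_union_Ioi_eq_Ioi hLpos.le).symm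
  have hmeas : ∀ l : ℝ, volume.restrict B {a | l < f a} = volume {x ∈ B | l < f x} := by
    intro l
    rw [Measure.restrict_apply (measurableSet_lt measurable_const hf)]
    congr 1
    ext x; simp [and_comm]
  have h1 : ∫⁻ l in Set.Ioc 0 L, volume.restrict B {a | l < f a} ≤ ENNReal.ofReal (b * L) := by
    calc ∫⁻ l in Set.Ioc 0 L, volume.restrict B {a | l < f a}
        ≤ ∫⁻ l in Set.Ioc 0 L, volume B := by
          refine lintegral_mono fun l => ?_
          rw [hmeas]
          exact measure_mono (fun x hx => hx.1)
      _ = ENNReal.ofReal (b * L) := by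
          rw [setLIntegral_const, Real.volume_Ioc, sub_zero, ENNReal.ofReal_mul hB0.le, hb,
            ENNReal.ofReal_toReal hBtop]
  have h2 : ∫⁻ l in Set.Ioi L, volume.restrict B {a | l < f a} ≤
      ENNReal.ofReal (K ^ r * (L ^ (1 - r) / (r - 1))) := by
    calc ∫⁻ l in Set.Ioi L, volume.restrict B {a | l < f a}
        ≤ ∫⁻ l in Set.Ioi L, ENNReal.ofReal (K ^ r * l ^ (-r)) := by
          refine setLIntegral_mono (by fun_prop) fun l hl => ?_
          have hl0 : 0 < l := hLpos.trans hl
          rw [hmeas]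
          have h3 := h l hl0
          rw [mul_comm] at h3
          have h4 := (ENNReal.le_div_iff_mul_le (Or.inl (by simpa using hl0))
            (Or.inl ENNReal.ofReal_ne_top)).2 h3
          rw [← ENNReal.ofReal_div_of_pos hl0] at h4
          have h5 := ENNReal.rpow_le_rpow h4 hr0.le
          rw [← ENNReal.rpow_mul, one_div_mul_cancel hr0.ne', ENNReal.rpow_one,
            ENNReal.ofReal_rpow_of_pos (by positivity), Real.div_rpow hK.le hl0.le, div_eq_mul_inv,
            ← Real.rpow_neg hl0.le] at h5
          exact h5
      _ = ENNReal.ofReal (K ^ r * (L ^ (1 - r) / (r - 1))) := by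
          have hlt : -r < -1 := by linarith
          rw [← ofReal_integral_eq_lintegral_ofReal
            ((integrableOn_Ioi_rpow_of_lt hlt hLpos).const_mul _)]
          · rw [integral_const_mul, integral_Ioi_rpow_of_lt hlt hLpos]
            congr 2
            rw [show -r + 1 = -(r - 1) by ring, show 1 - r = -(r - 1) by ring, neg_div_neg_eq]
          · refine (ae_restrict_iff' measurableSet_Ioi).2 (Filter.Eventually.of_forall fun l hl => ?_)
            have hl0 : 0 < l := hLpos.trans hl
            simp only [Pi.zero_apply]
            positivity
  rw [hsub]
  refine (lintegral_union_le _ _ _).trans ((add_le_add h1 h2).trans (le_of_eq ?_))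
  rw [← ENNReal.ofReal_add (by positivity) (by positivity)]
  congr 1
  have e1 : b * L = K * b ^ (1 - 1 / r) := by
    rw [hL, sub_eq_add_neg, Real.rpow_add hB0, Real.rpow_one]; ring
  have e2 : K ^ r * L ^ (1 - r) = K * b ^ (1 - 1 / r) := by
    rw [hL, Real.mul_rpow hK.le (by positivity), ← Real.rpow_mul hB0.le, ← mul_assoc,
      ← Real.rpow_add hK]
    rw [show r + (1 - r) = 1 by ring, Real.rpow_one]
    congr 2
    field_simp
    ring
  rw [e1, ← mul_div_assoc, e2]
  field_simp
  ring

lemma avg_uloc (N : ℕ) (r : ℝ≥0∞) {m : ℝ} (hm : 0 < m) (hm1 : m ≤ 1)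
    (hr : 1 < ENNReal.ofReal m * r) :
    ∃ C : ℝ, 0 < C ∧ ∀ (f : Euc N → ℝ) (K δ : ℝ), Measurable f → (∀ x, 0 ≤ f x) → 0 < K → 0 < δ →
      ulocNorm N r (Real.sqrt δ) f ≤ ENNReal.ofReal K → ∀ s : ℝ, 0 < s → s ≤ δ → ∀ z : Euc N,
      ∫⁻ y in Metric.ball z (Real.sqrt s), ENNReal.ofReal (f y ^ (1 / m)) ≤
        ENNReal.ofReal (C * K ^ (1 / m) * s ^ ((N : ℝ) / 2 - (N : ℝ) / 2 * r⁻¹.toReal / m)) := by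
  have hw := vol_unit_pos N
  set ω := (volume (Metric.ball (0 : Euc N) 1)).toReal with hω
  by_cases hrt : r = ⊤
  · subst hrt
    refine ⟨ω, hw, fun f K δ hf hf0 hK hδ hU s hs hsδ z => ?_⟩
    unfold ulocNorm at hU
    rw [if_pos rfl] at hU
    have hae : ∀ᵐ y, f y ≤ K := by
      filter_upwards [ENNReal.ae_le_essSup (μ := (volume : Measure (Euc N)))
        (fun x => ENNReal.ofReal |f x|)] with y hy
      have := hy.trans hU
      rw [ENNReal.ofReal_le_ofReal_iff hK.le] at this
      exact (le_abs_self _).trans this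
    calc ∫⁻ y in Metric.ball z (Real.sqrt s), ENNReal.ofReal (f y ^ (1 / m))
        ≤ ∫⁻ y in Metric.ball z (Real.sqrt s), ENNReal.ofReal (K ^ (1 / m)) := by
          refine lintegral_mono_ae (ae_restrict_of_ae ?_)
          filter_upwards [hae] with y hy
          exact ENNReal.ofReal_le_ofReal (Real.rpow_le_rpow (hf0 y) hy (by positivity))
      _ = _ := by
          rw [setLIntegral_const, vol_ball N hs, ← ENNReal.ofReal_mul (by positivity)]
          congr 1
          simp [← hω]
          ring
  · set ρ := r.toReal with hρ
    have hrr : r = ENNReal.ofReal ρ := (ENNReal.ofReal_toReal hrt).symm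
    have hmr : 1 < m * ρ := by
      rw [hrr, ← ENNReal.ofReal_mul hm.le] at hr
      exact ENNReal.one_lt_ofReal.1 hr
    have hρ0 : 0 ≤ ρ := ENNReal.toReal_nonneg
    have hρ1 : 1 < ρ := by nlinarith
    have hr1 : r ≠ 1 := by
      intro h; rw [hρ, h] at hρ1; simp at hρ1
    have hmr1 : 0 < m * ρ - 1 := by linarith
    have hmr0 : 0 < m * ρ := by linarith
    refine ⟨m * ρ / (m * ρ - 1) * ω ^ (1 - 1 / (m * ρ)), by positivity,
      fun f K δ hf hf0 hK hδ hU s hs hsδ z => ?_⟩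
    unfold ulocNorm at hU
    rw [if_neg hrt] at hU
    have hU1 := (le_iSup (fun x => wnorm N r f (Metric.ball x (Real.sqrt δ))) z).trans hU
    unfold wnorm at hU1
    rw [if_neg hr1, if_neg hrt] at hU1
    have hvb := vol_ball N hs z
    rw [← hω] at hvb
    have hvb' : (volume (Metric.ball z (Real.sqrt s))).toReal = s ^ ((N : ℝ) / 2) * ω := by
      rw [hvb, ENNReal.toReal_ofReal (by positivity)]
    have hmain := weak_avg (N := N) (r := m * ρ) (K := K ^ (1 / m)) hmr (by positivity)
      (B := Metric.ball z (Real.sqrt s)) (by rw [hvb']; positivity)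
      (f := fun y => f y ^ (1 / m)) (hf.pow_const _) (fun y => Real.rpow_nonneg (hf0 y) _) ?_
    · refine hmain.trans (le_of_eq ?_)
      rw [hvb']
      congr 1
      rw [Real.mul_rpow (by positivity) hw.le, ← Real.rpow_mul hs.le]
      have : (N : ℝ) / 2 * (1 - 1 / (m * ρ)) = (N : ℝ) / 2 - (N : ℝ) / 2 * r⁻¹.toReal / m := by
        rw [ENNReal.toReal_inv, ← hρ]
        field_simp
      rw [this]
      ring
    · intro l hl
      have hlm : 0 < l ^ m := by positivity
      have h1 := (le_iSup₂ (f := fun (l : ℝ) (_ : 0 < l) => ENNReal.ofReal l *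
        (volume {x ∈ Metric.ball z (Real.sqrt δ) | l < |f x|}) ^ (1 / r.toReal)) (l ^ m) hlm).trans hU1
      have hsub : {x ∈ Metric.ball z (Real.sqrt s) | l < f x ^ (1 / m)} ⊆
          {x ∈ Metric.ball z (Real.sqrt δ) | l ^ m < |f x|} := by
        intro x hx
        refine ⟨Metric.ball_subset_ball (Real.sqrt_le_sqrt hsδ) hx.1, ?_⟩
        rw [abs_of_nonneg (hf0 x)]
        have := Real.rpow_lt_rpow hl.le hx.2 hm
        rwa [← Real.rpow_mul (hf0 x), one_div_mul_cancel hm.ne', Real.rpow_one] at this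
      have h2 : ENNReal.ofReal (l ^ m) *
          (volume {x ∈ Metric.ball z (Real.sqrt s) | l < f x ^ (1 / m)}) ^ (1 / ρ) ≤
          ENNReal.ofReal K := by
        refine le_trans ?_ h1
        gcongr
      have h3 := ENNReal.rpow_le_rpow h2 (z := 1 / m) (by positivity)
      rw [ENNReal.mul_rpow_of_nonneg _ _ (by positivity), ← ENNReal.rpow_mul,
        ENNReal.ofReal_rpow_of_pos hlm, ENNReal.ofReal_rpow_of_pos hK, ← Real.rpow_mul hl.le,
        mul_one_div_cancel hm.ne', Real.rpow_one] at h3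
      convert h3 using 3
      field_simp

lemma heat_uloc (N : ℕ) (r : ℝ≥0∞) {m : ℝ} (hm : 0 < m) (hm1 : m ≤ 1)
    (hr : 1 < ENNReal.ofReal m * r) :
    ∃ C : ℝ, 0 < C ∧ ∀ (f : Euc N → ℝ) (K δ : ℝ), Measurable f → (∀ x, 0 ≤ f x) → 0 < K → 0 < δ →
      ulocNorm N r (Real.sqrt δ) f ≤ ENNReal.ofReal K → ∀ s : ℝ, 0 < s → s ≤ δ → ∀ x : Euc N,
      hE N s (fun y => ENNReal.ofReal (f y ^ (1 / m))) x ≤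
        ENNReal.ofReal (C * K ^ (1 / m) * s ^ (-((N : ℝ) / 2 * r⁻¹.toReal / m))) := by
  obtain ⟨C, hC, h⟩ := avg_uloc N r hm hm1 hr
  have hw := vol_unit_pos N
  refine ⟨Real.exp (1 / 4) * 2 ^ ((N : ℝ) / 2) /
      (volume (Metric.ball (0 : Euc N) 1)).toReal * C, by positivity,
      fun f K δ hf hf0 hK hδ hU s hs hsδ x => ?_⟩
  refine (hE_avg N hs (hf.pow_const _).ennreal_ofReal
    (h f K δ hf hf0 hK hδ hU s hs hsδ) x).trans (le_of_eq ?_)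
  congr 1
  rw [sub_eq_add_neg, Real.rpow_add hs, Real.rpow_neg hs.le ((N : ℝ) / 2)]
  have : s ^ ((N : ℝ) / 2) ≠ 0 := by positivity
  field_simp


/-! ### Monotone iteration -/

def duh (N : ℕ) (F : Euc N → ℝ → ℝ≥0∞) (x : Euc N) (t : ℝ) : ℝ≥0∞ :=
  ∫⁻ s in Set.Ioo 0 t, hE N (t - s) (fun y => F y s) x

lemma measurable_duh {N : ℕ} {F : Euc N → ℝ → ℝ≥0∞} (hF : Measurable (Function.uncurry F)) :
    Measurable (Function.uncurry (duh N F)) := by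
  have h1 : Function.uncurry (duh N F) = fun a : Euc N × ℝ => ∫⁻ s,
      ({b : (Euc N × ℝ) × ℝ | 0 < b.2 ∧ b.2 < b.1.2}.indicator
        (fun b => hE N (b.1.2 - b.2) (fun y => F y b.2) b.1.1)) (a, s) := by
    ext a
    obtain ⟨x, t⟩ := a
    simp only [Function.uncurry, duh]
    rw [← lintegral_indicator measurableSet_Ioo]
    refine lintegral_congr fun s => ?_
    simp only [Set.indicator, Set.mem_Ioo, Set.mem_ofPred_eq]
  rw [h1]
  apply Measurable.lintegral_prod_right'
  refine (measurable_hE_joint hF).indicator ?_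
  exact (measurableSet_lt measurable_const measurable_snd).inter
    (measurableSet_lt measurable_snd (measurable_snd.comp measurable_fst))

lemma measurable_slice {N : ℕ} {F : Euc N → ℝ → ℝ≥0∞} (hF : Measurable (Function.uncurry F))
    (s : ℝ) : Measurable (fun y => F y s) :=
  hF.comp (measurable_id.prodMk measurable_const)

lemma measurable_hE_s {N : ℕ} {F : Euc N → ℝ → ℝ≥0∞} (hF : Measurable (Function.uncurry F))
    (x : Euc N) (t : ℝ) : Measurable (fun s => hE N (t - s) (fun y => F y s) x) := by
  have h2 : Measurable (fun s : ℝ => (((x, t) : Euc N × ℝ), s)) :=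
    measurable_const.prodMk measurable_id
  have h3 := (measurable_hE_joint hF).comp h2
  simpa only [Function.comp_def] using h3

lemma duh_mono {N : ℕ} {F G : Euc N → ℝ → ℝ≥0∞} {t : ℝ}
    (h : ∀ s, 0 < s → s < t → ∀ᵐ y, F y s ≤ G y s) (x : Euc N) : duh N F x t ≤ duh N G x t := by
  refine lintegral_mono_ae ((ae_restrict_iff' measurableSet_Ioo).2
    (Filter.Eventually.of_forall fun s hs => ?_))
  exact hE_mono_ae (h s hs.1 hs.2) x

lemma duh_iSup {N : ℕ} {F : ℕ → Euc N → ℝ → ℝ≥0∞} (hF : ∀ n, Measurable (Function.uncurry (F n)))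
    (hmono : ∀ n y s, F n y s ≤ F (n + 1) y s) (x : Euc N) (t : ℝ) :
    duh N (fun y s => ⨆ n, F n y s) x t = ⨆ n, duh N (F n) x t := by
  have hm : ∀ y s, Monotone fun n => F n y s := fun y s => monotone_nat_of_le_succ (hmono · y s)
  unfold duh
  rw [← lintegral_iSup (fun n => measurable_hE_s (hF n) x t)]
  · refine lintegral_congr fun s => ?_
    unfold hE
    rw [← lintegral_iSup (fun n => measurable_gk_mul _ x (measurable_slice (hF n) s))]
    · refine lintegral_congr fun y => ?_
      rw [ENNReal.mul_iSup]
    · intro i j hij y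
      exact mul_le_mul_right (hm y s hij) _
  · intro i j hij s
    exact hE_mono_ae (Filter.Eventually.of_forall fun y => hm y s hij) x

lemma duh_semigroup {N : ℕ} {F : Euc N → ℝ → ℝ≥0∞} (hF : Measurable (Function.uncurry F))
    {t₀ t : ℝ} (ht : t₀ < t) (x : Euc N) :
    ∫⁻ s in Set.Ioo 0 t₀, hE N (t - s) (fun y => F y s) x =
      hE N (t - t₀) (fun y => duh N F y t₀) x := by
  have h1 : hE N (t - t₀) (fun y => duh N F y t₀) x =
      ∫⁻ y, ∫⁻ s in Set.Ioo 0 t₀, gk N (t - t₀) (x - y) * hE N (t₀ - s) (fun w => F w s) y := by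
    unfold duh
    conv_lhs => unfold hE
    refine lintegral_congr fun y => ?_
    exact (lintegral_const_mul _ (measurable_hE_s hF y t₀)).symm
  rw [h1, lintegral_lintegral_swap]
  · refine setLIntegral_congr_fun measurableSet_Ioo fun s hs => ?_
    have := hE_hE (N := N) (t := t - t₀) (s := t₀ - s) (sub_pos.2 ht) (sub_pos.2 hs.2)
      (measurable_slice hF s) x
    rw [show t - t₀ + (t₀ - s) = t - s by ring] at this
    rw [← this]
    rfl
  · apply Measurable.aemeasurable
    have h2 : Measurable (fun a : Euc N × ℝ => gk N (t - t₀) (x - a.1)) :=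
      (measurable_gk_sub_right N (t - t₀) x).comp measurable_fst
    have h4 : Measurable (fun a : Euc N × ℝ => ((a.1, t₀), a.2)) :=
      (measurable_fst.prodMk measurable_const).prodMk measurable_snd
    have h3 : Measurable (fun a : Euc N × ℝ => hE N (t₀ - a.2) (fun w => F w a.2) a.1) := by
      have h5 := (measurable_hE_joint hF).comp h4
      simpa only [Function.comp_def] using h5
    exact Measurable.mul h2 h3

def itr (N : ℕ) (p q : ℝ) (f g : Euc N → ℝ≥0∞) :
    ℕ → (Euc N → ℝ → ℝ≥0∞) × (Euc N → ℝ → ℝ≥0∞)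
  | 0 => (fun _ _ => 0, fun _ _ => 0)
  | n + 1 => (fun x t => hE N t f x + duh N (fun y s => (itr N p q f g n).2 y s ^ p) x t,
      fun x t => hE N t g x + duh N (fun y s => (itr N p q f g n).1 y s ^ q) x t)

lemma measurable_rpow_uncurry {N : ℕ} {F : Euc N → ℝ → ℝ≥0∞} (hF : Measurable (Function.uncurry F))
    (p : ℝ) : Measurable (Function.uncurry fun y s => F y s ^ p) :=
  hF.pow_const p

lemma itr_meas {N : ℕ} {p q : ℝ} {f g : Euc N → ℝ≥0∞} (hf : Measurable f) (hg : Measurable g)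
    (n : ℕ) : Measurable (Function.uncurry (itr N p q f g n).1) ∧
      Measurable (Function.uncurry (itr N p q f g n).2) := by
  induction n with
  | zero => exact ⟨measurable_const, measurable_const⟩
  | succ n ih =>
    exact ⟨Measurable.add (measurable_hE hf) (measurable_duh (measurable_rpow_uncurry ih.2 p)),
      Measurable.add (measurable_hE hg) (measurable_duh (measurable_rpow_uncurry ih.1 q))⟩

lemma itr_mono {N : ℕ} {p q : ℝ} (hp : 0 ≤ p) (hq : 0 ≤ q) (f g : Euc N → ℝ≥0∞)
    (n : ℕ) : (∀ x t, (itr N p q f g n).1 x t ≤ (itr N p q f g (n + 1)).1 x t) ∧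
      (∀ x t, (itr N p q f g n).2 x t ≤ (itr N p q f g (n + 1)).2 x t) := by
  induction n with
  | zero => exact ⟨fun _ _ => zero_le, fun _ _ => zero_le⟩
  | succ n ih =>
    constructor
    · intro x t
      exact add_le_add_right (duh_mono (fun s _ _ => Filter.Eventually.of_forall fun y =>
        ENNReal.rpow_le_rpow (ih.2 y s) hp) x) _
    · intro x t
      exact add_le_add_right (duh_mono (fun s _ _ => Filter.Eventually.of_forall fun y =>
        ENNReal.rpow_le_rpow (ih.1 y s) hq) x) _

lemma iSup_rpow_aux (p : ℝ) (hp : 0 < p) (a : ℕ → ℝ≥0∞) : (⨆ n, a n) ^ p = ⨆ n, a n ^ p :=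
  (ENNReal.orderIsoRpow p hp).map_iSup a

lemma itr_fix {N : ℕ} {p q : ℝ} (hp : 0 < p) (hq : 0 < q) {f g : Euc N → ℝ≥0∞}
    (hf : Measurable f) (hg : Measurable g) (x : Euc N) (t : ℝ) :
    (⨆ n, (itr N p q f g n).1 x t = hE N t f x +
      duh N (fun y s => (⨆ n, (itr N p q f g n).2 y s) ^ p) x t) ∧
    (⨆ n, (itr N p q f g n).2 x t = hE N t g x +
      duh N (fun y s => (⨆ n, (itr N p q f g n).1 y s) ^ q) x t) := by
  have hmono := itr_mono hp.le hq.le f g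
  have hmeas := itr_meas (p := p) (q := q) hf hg
  constructor
  · simp_rw [iSup_rpow_aux p hp]
    rw [duh_iSup (fun n => measurable_rpow_uncurry (hmeas n).2 p)
      (fun n y s => ENNReal.rpow_le_rpow ((hmono n).2 y s) hp.le), ENNReal.add_iSup]
    rw [← Monotone.iSup_nat_add (f := fun n => (itr N p q f g n).1 x t)
      (monotone_nat_of_le_succ fun n => (hmono n).1 x t) 1]
    rfl
  · simp_rw [iSup_rpow_aux q hq]
    rw [duh_iSup (fun n => measurable_rpow_uncurry (hmeas n).1 q)
      (fun n y s => ENNReal.rpow_le_rpow ((hmono n).1 y s) hq.le), ENNReal.add_iSup]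
    rw [← Monotone.iSup_nat_add (f := fun n => (itr N p q f g n).2 x t)
      (monotone_nat_of_le_succ fun n => (hmono n).2 x t) 1]
    rfl

lemma duh_heatS {N : ℕ} {p : ℝ} (hp : 0 ≤ p) {v : Euc N → ℝ → ℝ} (hv : ∀ x t, 0 ≤ v x t) (t : ℝ)
    (x : Euc N) :
    ∫⁻ s in Set.Ioo 0 t, heatS N (t - s) (fun y => v y s ^ p) x =
      duh N (fun y s => ENNReal.ofReal (v y s) ^ p) x t := by
  refine setLIntegral_congr_fun measurableSet_Ioo fun s hs => ?_
  simp only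
  rw [heatS_eq (sub_pos.2 hs.2)]
  simp_rw [ENNReal.ofReal_rpow_of_nonneg (hv _ s) hp]

/-- The iterates stay below any solution. -/
lemma itr_le_sol {N : ℕ} {p q : ℝ} (hp : 0 ≤ p) (hq : 0 ≤ q) {u₀ v₀ : Euc N → ℝ} {T : ℝ}
    {u v : Euc N → ℝ → ℝ} (h : IsSolSys N p q u₀ v₀ (ENNReal.ofReal T) u v) (n : ℕ) :
    ∀ t, 0 < t → t < T →
      (∀ᵐ x, (itr N p q (fun y => ENNReal.ofReal (u₀ y)) (fun y => ENNReal.ofReal (v₀ y)) n).1 x t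
        ≤ ENNReal.ofReal (u x t)) ∧
      (∀ᵐ x, (itr N p q (fun y => ENNReal.ofReal (u₀ y)) (fun y => ENNReal.ofReal (v₀ y)) n).2 x t
        ≤ ENNReal.ofReal (v x t)) := by
  obtain ⟨⟨hu, hv, -⟩, hD⟩ := h
  induction n with
  | zero =>
    intro t _ _
    exact ⟨Filter.Eventually.of_forall fun _ => zero_le,
      Filter.Eventually.of_forall fun _ => zero_le⟩
  | succ n ih =>
    intro t ht htT
    obtain ⟨h1, h2⟩ := hD t ht ((ENNReal.ofReal_lt_ofReal_iff (ht.trans htT)).2 htT)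
    constructor
    · filter_upwards [h1] with x hx
      rw [hx, heatS_eq ht, duh_heatS hp hv]
      refine add_le_add_right (duh_mono (fun s hs hst => ?_) x) _
      filter_upwards [(ih s hs (hst.trans htT)).2] with y hy
      exact ENNReal.rpow_le_rpow hy hp
    · filter_upwards [h2] with x hx
      rw [hx, heatS_eq ht, duh_heatS hq hu]
      refine add_le_add_right (duh_mono (fun s hs hst => ?_) x) _
      filter_upwards [(ih s hs (hst.trans htT)).1] with y hy
      exact ENNReal.rpow_le_rpow hy hq

/-- The minimal solution is the limit of the iterates. -/
lemma min_le_itr {N : ℕ} {p q : ℝ} (hp : 0 < p) (hq : 0 < q) {u₀ v₀ : Euc N → ℝ} {T : ℝ}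
    (hu₀ : Measurable u₀) (hv₀ : Measurable v₀)
    {u v : Euc N → ℝ → ℝ} (h : IsMinSolSys N p q u₀ v₀ (ENNReal.ofReal T) u v) :
    ∀ t, 0 < t → t < T →
      (∀ᵐ x, ENNReal.ofReal (u x t) ≤
        ⨆ n, (itr N p q (fun y => ENNReal.ofReal (u₀ y)) (fun y => ENNReal.ofReal (v₀ y)) n).1 x t) ∧
      (∀ᵐ x, ENNReal.ofReal (v x t) ≤
        ⨆ n, (itr N p q (fun y => ENNReal.ofReal (u₀ y)) (fun y => ENNReal.ofReal (v₀ y)) n).2 x t)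
      := by
  obtain ⟨hsol, hmin⟩ := h
  set f : Euc N → ℝ≥0∞ := fun y => ENNReal.ofReal (u₀ y) with hf
  set g : Euc N → ℝ≥0∞ := fun y => ENNReal.ofReal (v₀ y) with hg
  have hfm : Measurable f := hu₀.ennreal_ofReal
  have hgm : Measurable g := hv₀.ennreal_ofReal
  set U : Euc N → ℝ → ℝ≥0∞ := fun x t => ⨆ n, (itr N p q f g n).1 x t with hU
  set V : Euc N → ℝ → ℝ≥0∞ := fun x t => ⨆ n, (itr N p q f g n).2 x t with hV
  have hUm : Measurable (Function.uncurry U) :=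
    Measurable.iSup fun n => (itr_meas (p := p) (q := q) hfm hgm n).1
  have hVm : Measurable (Function.uncurry V) :=
    Measurable.iSup fun n => (itr_meas (p := p) (q := q) hfm hgm n).2
  have hle := itr_le_sol hp.le hq.le hsol
  have hUle : ∀ t, 0 < t → t < T → ∀ᵐ x, U x t ≤ ENNReal.ofReal (u x t) := by
    intro t ht htT
    filter_upwards [ae_all_iff.2 fun n => (hle n t ht htT).1] with x hx
    exact iSup_le hx
  have hVle : ∀ t, 0 < t → t < T → ∀ᵐ x, V x t ≤ ENNReal.ofReal (v x t) := by
    intro t ht htT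
    filter_upwards [ae_all_iff.2 fun n => (hle n t ht htT).2] with x hx
    exact iSup_le hx
  have hUR : ∀ t, 0 < t → t < T → ∀ᵐ x, ENNReal.ofReal (U x t).toReal = U x t := by
    intro t ht htT
    filter_upwards [hUle t ht htT] with x hx
    exact ENNReal.ofReal_toReal (hx.trans_lt ENNReal.ofReal_lt_top).ne
  have hVR : ∀ t, 0 < t → t < T → ∀ᵐ x, ENNReal.ofReal (V x t).toReal = V x t := by
    intro t ht htT
    filter_upwards [hVle t ht htT] with x hx
    exact ENNReal.ofReal_toReal (hx.trans_lt ENNReal.ofReal_lt_top).ne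
  obtain ⟨⟨hu, hv, hum, hvm, hub, hvb⟩, hD⟩ := hsol
  have hTpos : ∀ t : ℝ, 0 < t → ENNReal.ofReal t < ENNReal.ofReal T → t < T := fun t _ htT =>
    lt_of_not_ge fun hge => absurd htT (not_lt.2 (ENNReal.ofReal_le_ofReal hge))
  have hbd : ∀ (W : Euc N → ℝ → ℝ≥0∞) (w : Euc N → ℝ → ℝ), (∀ x t, 0 ≤ w x t) →
      (∀ t, 0 < t → t < T → ∀ᵐ x, W x t ≤ ENNReal.ofReal (w x t)) →
      LocBdd N (ENNReal.ofReal T) w →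
      LocBdd N (ENNReal.ofReal T) (fun x t => (W x t).toReal) := by
    intro W w hw hWw hwb τ hτ hτT
    obtain ⟨M, hM⟩ := hwb τ hτ hτT
    refine ⟨M, fun t ht htT => ?_⟩
    have ht0 : 0 < t := hτ.trans_le ht
    have htT' : t < T := hTpos t ht0
      (((ENNReal.ofReal_lt_ofReal_iff (by linarith)).2 (by linarith)).trans_le htT)
    filter_upwards [hM t ht htT, hWw t ht0 htT'] with x hx1 hx2
    rw [abs_of_nonneg ENNReal.toReal_nonneg]
    exact (ENNReal.toReal_le_of_le_ofReal (hw x t) hx2).trans ((le_abs_self _).trans hx1)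
  have hsol' : IsSolSys N p q u₀ v₀ (ENNReal.ofReal T) (fun x t => (U x t).toReal)
      (fun x t => (V x t).toReal) := by
    refine ⟨⟨fun _ _ => ENNReal.toReal_nonneg, fun _ _ => ENNReal.toReal_nonneg,
      hUm.ennreal_toReal, hVm.ennreal_toReal, hbd U u hu hUle hub, hbd V v hv hVle hvb⟩, ?_⟩
    intro t ht htT
    have htT' := hTpos t ht htT
    constructor
    · filter_upwards [hUR t ht htT'] with x hx
      rw [hx, heatS_eq ht, duh_heatS hp.le (fun _ _ => ENNReal.toReal_nonneg)]
      refine (itr_fix hp hq hfm hgm x t).1.trans ?_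
      congr 1
      apply le_antisymm
      · refine duh_mono (fun s hs hst => ?_) x
        filter_upwards [hVR s hs (hst.trans htT')] with y hy
        rw [hy]
      · refine duh_mono (fun s hs hst => ?_) x
        filter_upwards [hVR s hs (hst.trans htT')] with y hy
        rw [hy]
    · filter_upwards [hVR t ht htT'] with x hx
      rw [hx, heatS_eq ht, duh_heatS hq.le (fun _ _ => ENNReal.toReal_nonneg)]
      refine (itr_fix hp hq hfm hgm x t).2.trans ?_
      congr 1
      apply le_antisymm
      · refine duh_mono (fun s hs hst => ?_) x
        filter_upwards [hUR s hs (hst.trans htT')] with y hy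
        rw [hy]
      · refine duh_mono (fun s hs hst => ?_) x
        filter_upwards [hUR s hs (hst.trans htT')] with y hy
        rw [hy]
  intro t ht htT
  obtain ⟨h1, h2⟩ := hmin _ _ hsol' t ht ((ENNReal.ofReal_lt_ofReal_iff (ht.trans htT)).2 htT)
  constructor
  · filter_upwards [h1, hUR t ht htT] with x hx1 hx2
    refine (ENNReal.ofReal_le_ofReal hx1).trans (le_of_eq hx2)
  · filter_upwards [h2, hVR t ht htT] with x hx1 hx2
    refine (ENNReal.ofReal_le_ofReal hx1).trans (le_of_eq hx2)

/-- Comparison of one Duhamel step with data at time `t₀`. -/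
lemma step_split {N : ℕ} {F : Euc N → ℝ → ℝ≥0∞} (hF : Measurable (Function.uncurry F))
    {f : Euc N → ℝ≥0∞} (hf : Measurable f) {t₀ t : ℝ} (ht₀ : 0 < t₀) (ht : t₀ < t) (x : Euc N) :
    hE N t f x + duh N F x t = hE N (t - t₀) (fun y => hE N t₀ f y + duh N F y t₀) x +
      ∫⁻ s in Set.Ioo t₀ t, hE N (t - s) (fun y => F y s) x := by
  rw [hE_add (measurable_hE_x hf t₀), ← duh_semigroup hF ht]
  have h1 := hE_hE (N := N) (sub_pos.2 ht) ht₀ hf x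
  rw [sub_add_cancel] at h1
  rw [show hE N (t - t₀) (fun y => hE N t₀ f y) x = hE N t f x from h1, add_assoc]
  congr 1
  unfold duh
  have hu : Set.Ioo 0 t = Set.Ioc 0 t₀ ∪ Set.Ioo t₀ t := (Set.Ioc_union_Ioo_eq_Ioo ht₀.le ht).symm
  rw [hu, lintegral_union measurableSet_Ioo]
  · congr 1
    exact setLIntegral_congr Ioo_ae_eq_Ioc.symm
  · rw [Set.disjoint_left]
    intro a ha hb
    exact absurd ha.2 (not_le.2 hb.1)

lemma itr_le_super {N : ℕ} {p q m κ : ℝ} (hp : 0 < p) (hq : 0 < q) (hm : 0 < m) (hm1 : m ≤ 1)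
    (hκ : 0 < κ) (h1 : m * p = κ + 1) (h2 : q = κ + m) {f g : Euc N → ℝ≥0∞}
    (hf : Measurable f) (hg : Measurable g) {t₀ T : ℝ} (ht₀ : 0 < t₀)
    {w₀ : Euc N → ℝ≥0∞} (hw : Measurable w₀)
    (hu : ∀ n, ∀ᵐ x, (itr N p q f g n).1 x t₀ ≤ w₀ x)
    (hv : ∀ n, ∀ᵐ x, (itr N p q f g n).2 x t₀ ≤ w₀ x ^ m)
    {Z : ℝ → ℝ≥0∞} (hZ : Measurable Z)
    (hbd : ∀ s, t₀ < s → s < T → ∀ x, hE N (s - t₀) w₀ x ≤ Z s)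
    (hI1 : 2 ^ p * ∫⁻ s in Set.Ioo t₀ T, Z s ^ κ ≤ 1)
    (hI2 : 2 ^ q * ∫⁻ s in Set.Ioo t₀ T, Z s ^ κ ≤ 1) (n : ℕ) :
    ∀ t, t₀ < t → t < T → ∀ x,
      (itr N p q f g n).1 x t ≤ 2 * hE N (t - t₀) w₀ x ∧
      (itr N p q f g n).2 x t ≤ 2 * hE N (t - t₀) w₀ x ^ m := by
  have hmeas := itr_meas (p := p) (q := q) hf hg
  have hwm : ∀ s, Measurable (fun y => hE N s w₀ y) := fun s => measurable_hE_x hw s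
  have hsg : ∀ s t, t₀ < s → s < t → ∀ x,
      hE N (t - s) (fun y => hE N (s - t₀) w₀ y) x = hE N (t - t₀) w₀ x := by
    intro s t hs hst x
    have := hE_hE (N := N) (sub_pos.2 hst) (sub_pos.2 hs) hw x
    rw [show t - s + (s - t₀) = t - t₀ by ring] at this
    exact this
  induction n with
  | zero => exact fun _ _ _ _ => ⟨zero_le, zero_le⟩
  | succ n ih =>
    intro t ht htT x
    have hstep : ∀ (c A : ℝ≥0∞) (F : Euc N → ℝ → ℝ≥0∞),
        (∀ s, t₀ < s → s < t → hE N (t - s) (fun y => F y s) x ≤ Z s ^ κ * (c * A)) →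
        c * (∫⁻ s in Set.Ioo t₀ T, Z s ^ κ) ≤ 1 →
        ∫⁻ s in Set.Ioo t₀ t, hE N (t - s) (fun y => F y s) x ≤ A := by
      intro c A F hF hc
      calc ∫⁻ s in Set.Ioo t₀ t, hE N (t - s) (fun y => F y s) x
          ≤ ∫⁻ s in Set.Ioo t₀ t, Z s ^ κ * (c * A) :=
            setLIntegral_mono ((hZ.pow_const κ).mul_const _) fun s hs => hF s hs.1 hs.2
        _ ≤ ∫⁻ s in Set.Ioo t₀ T, Z s ^ κ * (c * A) :=
            lintegral_mono_set (Set.Ioo_subset_Ioo le_rfl htT.le)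
        _ = (c * ∫⁻ s in Set.Ioo t₀ T, Z s ^ κ) * A := by
            rw [lintegral_mul_const _ (hZ.pow_const κ)]; ring
        _ ≤ A := by
            calc _ ≤ 1 * A := by gcongr
              _ = A := one_mul A
    constructor
    · have hs := step_split (N := N) (measurable_rpow_uncurry (hmeas n).2 p) hf ht₀ ht x
      refine (le_of_eq hs).trans ?_
      rw [two_mul]
      refine add_le_add (hE_mono_ae (hu (n + 1)) x) ?_
      refine hstep (2 ^ p) _ _ (fun s hs hst => ?_) hI1
      calc hE N (t - s) (fun y => (itr N p q f g n).2 y s ^ p) x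
          ≤ hE N (t - s) (fun y => (2 ^ p * Z s ^ κ) * hE N (s - t₀) w₀ y) x := by
            refine hE_mono_ae (Filter.Eventually.of_forall fun y => ?_) x
            refine (ENNReal.rpow_le_rpow (ih s hs (hst.trans htT) y).2 hp.le).trans ?_
            rw [ENNReal.mul_rpow_of_nonneg _ _ hp.le, ← ENNReal.rpow_mul, h1,
              ENNReal.rpow_add_of_nonneg _ _ hκ.le zero_le_one, ENNReal.rpow_one, ← mul_assoc]
            gcongr
            exact hbd s hs (hst.trans htT) y
        _ = Z s ^ κ * (2 ^ p * hE N (t - t₀) w₀ x) := by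
            rw [hE_const_mul _ (hwm _), hsg s t hs hst]; ring
    · have hs := step_split (N := N) (measurable_rpow_uncurry (hmeas n).1 q) hg ht₀ ht x
      refine (le_of_eq hs).trans ?_
      rw [two_mul]
      refine add_le_add ((hE_mono_ae (hv (n + 1)) x).trans
        (hE_rpow_le (sub_pos.2 ht) hm hm1 hw x)) ?_
      refine hstep (2 ^ q) _ _ (fun s hs hst => ?_) hI2
      calc hE N (t - s) (fun y => (itr N p q f g n).1 y s ^ q) x
          ≤ hE N (t - s) (fun y => (2 ^ q * Z s ^ κ) * hE N (s - t₀) w₀ y ^ m) x := by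
            refine hE_mono_ae (Filter.Eventually.of_forall fun y => ?_) x
            refine (ENNReal.rpow_le_rpow (ih s hs (hst.trans htT) y).1 hq.le).trans ?_
            rw [ENNReal.mul_rpow_of_nonneg _ _ hq.le]
            have e : hE N (s - t₀) w₀ y ^ q =
                hE N (s - t₀) w₀ y ^ κ * hE N (s - t₀) w₀ y ^ m := by
              rw [← ENNReal.rpow_add_of_nonneg _ _ hκ.le hm.le, h2]
            rw [e, ← mul_assoc]
            gcongr
            exact hbd s hs (hst.trans htT) y
        _ = (2 ^ q * Z s ^ κ) * hE N (t - s) (fun y => hE N (s - t₀) w₀ y ^ m) x :=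
            hE_const_mul _ ((hwm _).pow_const m) x
        _ ≤ (2 ^ q * Z s ^ κ) * hE N (t - t₀) w₀ x ^ m := by
            gcongr
            rw [← hsg s t hs hst x]
            exact hE_rpow_le (sub_pos.2 hst) hm hm1 (hwm _) x
        _ = _ := by ring


/-! ### Conclusion -/

lemma int_lem {θ κ a c t₀ T : ℝ} (hκ : 0 < κ) (hθκ : θ * κ < 1) (haκ : a * κ = 1) (hc : 0 ≤ c)
    (hT : t₀ < T) :
    ∫⁻ s in Set.Ioo t₀ T, (ENNReal.ofReal (c * (T - t₀) ^ (-a + θ) * (s - t₀) ^ (-θ))) ^ κ =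
      ENNReal.ofReal (c ^ κ / (1 - θ * κ)) := by
  have hδ : 0 < T - t₀ := sub_pos.2 hT
  have hd : 0 < 1 - θ * κ := by linarith
  have hlt : -1 < -θ * κ := by linarith
  set A : ℝ := c ^ κ * (T - t₀) ^ (-1 + θ * κ) with hA
  have h1 : ∫⁻ s in Set.Ioo t₀ T, (ENNReal.ofReal (c * (T - t₀) ^ (-a + θ) * (s - t₀) ^ (-θ))) ^ κ =
      ∫⁻ s in Set.Ioo t₀ T, ENNReal.ofReal (A * (s - t₀) ^ (-θ * κ)) := by
    refine setLIntegral_congr_fun measurableSet_Ioo fun s hs => ?_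
    have hs0 : 0 < s - t₀ := sub_pos.2 hs.1
    rw [ENNReal.ofReal_rpow_of_nonneg (by positivity) hκ.le,
      Real.mul_rpow (by positivity) (by positivity), Real.mul_rpow hc (by positivity),
      ← Real.rpow_mul hδ.le, ← Real.rpow_mul hs0.le, hA]
    congr 4
    linear_combination -haκ
  have hii : IntervalIntegrable (fun s => A * (s - t₀) ^ (-θ * κ)) volume t₀ T := by
    have := (intervalIntegral.intervalIntegrable_rpow' (a := 0) (b := T - t₀) hlt).comp_sub_right t₀
    simp only [zero_add, sub_add_cancel] at this
    exact this.const_mul A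
  rw [h1, setLIntegral_congr Ioo_ae_eq_Ioc, ← ofReal_integral_eq_lintegral_ofReal]
  · rw [← intervalIntegral.integral_of_le hT.le, intervalIntegral.integral_const_mul,
      intervalIntegral.integral_comp_sub_right (fun s => s ^ (-θ * κ)) t₀, sub_self,
      integral_rpow (Or.inl hlt), Real.zero_rpow (by linarith), sub_zero, hA]
    congr 1
    have e : (T - t₀) ^ (-1 + θ * κ) * (T - t₀) ^ (-θ * κ + 1) = 1 := by
      rw [← Real.rpow_add hδ]
      simp
    rw [mul_div_assoc', mul_assoc, e, mul_one]
    congr 1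
    ring
  · exact (intervalIntegrable_iff_integrableOn_Ioc_of_le hT.le).1 hii
  · refine (ae_restrict_iff' measurableSet_Ioc).2 (Filter.Eventually.of_forall fun s hs => ?_)
    have : 0 ≤ s - t₀ := sub_nonneg.2 hs.1.le
    simp only [Pi.zero_apply, hA]
    positivity

lemma add_rpow_le_aux (κ : ℝ) (hκ : 0 < κ) (x y : ℝ≥0∞) :
    (x + y) ^ κ ≤ 2 ^ κ * (x ^ κ + y ^ κ) := by
  have h1 : x + y ≤ 2 * max x y := by
    rw [two_mul]; exact add_le_add (le_max_left _ _) (le_max_right _ _)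
  refine (ENNReal.rpow_le_rpow h1 hκ.le).trans ?_
  rw [ENNReal.mul_rpow_of_nonneg _ _ hκ.le]
  gcongr
  rcases le_total x y with h | h
  · rw [max_eq_right h]; exact le_add_self
  · rw [max_eq_left h]; exact le_self_add

lemma tend_aux (C d : ℝ) {e κ : ℝ} (he : 0 < e) (hκ : 0 < κ) :
    Tendsto (fun ε : ℝ => (C * ε ^ e) ^ κ / d) (nhds 0) (nhds 0) := by
  have h1 : Tendsto (fun ε : ℝ => ε ^ e) (nhds 0) (nhds 0) := by
    have := (tendsto_id (α := ℝ) (x := nhds 0)).rpow_const (p := e) (Or.inr he.le)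
    simpa [Real.zero_rpow he.ne'] using this
  have h2 := ((h1.const_mul C).rpow_const (p := κ) (Or.inr hκ.le)).div_const d
  simpa [Real.zero_rpow hκ.ne'] using h2

lemma eps_aux (C₁ C₂ d₁ d₂ B : ℝ) {m κ : ℝ} (hm : 0 < m) (hκ : 0 < κ) :
    ∃ ε : ℝ, 0 < ε ∧ B * ((C₁ * ε) ^ κ / d₁ + (C₂ * ε ^ (1 / m)) ^ κ / d₂) < 1 := by
  have h1 := tend_aux C₁ d₁ one_pos hκ
  have h2 := tend_aux C₂ d₂ (one_div_pos.2 hm) hκ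
  have h3 := ((h1.add h2).const_mul B)
  simp only [Real.rpow_one, add_zero, mul_zero] at h3
  have h4 := (h3.mono_left (nhdsWithin_le_nhds (s := Set.Ioi 0))).eventually (gt_mem_nhds one_pos)
  obtain ⟨ε, h5, h6⟩ := (h4.and self_mem_nhdsWithin).exists
  exact ⟨ε, h6, h5⟩

lemma core {N : ℕ} {p q m κ a θ₁ θ₂ : ℝ} (hp : 0 < p) (hq : 0 < q) (hm : 0 < m) (hm1 : m ≤ 1)
    (hκ : 0 < κ) (h1 : m * p = κ + 1) (h2 : q = κ + m) (haκ : a * κ = 1) {r₁ r₂ : ℝ≥0∞}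
    (hr₁ : 1 < r₁) (hr₂ : 1 < ENNReal.ofReal m * r₂)
    (hθ₁ : θ₁ = (N : ℝ) / 2 * r₁⁻¹.toReal) (hθ₂ : θ₂ = (N : ℝ) / 2 * r₂⁻¹.toReal / m)
    (hθκ₁ : θ₁ * κ < 1) (hθκ₂ : θ₂ * κ < 1) :
    ∃ ε : ℝ, 0 < ε ∧ ∀ (T : ℝ) (u₀ v₀ : Euc N → ℝ) (u v : Euc N → ℝ → ℝ), Measurable u₀ →
      Measurable v₀ → IsMinSolSys N p q u₀ v₀ (ENNReal.ofReal T) u v →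
      ∀ t₀, 0 < t₀ → t₀ < T →
      ulocNorm N r₁ (Real.sqrt (T - t₀)) (fun x => u x t₀) ≤
        ENNReal.ofReal (ε * (T - t₀) ^ (-(a - θ₁))) →
      ulocNorm N r₂ (Real.sqrt (T - t₀)) (fun x => v x t₀) ≤
        ENNReal.ofReal (ε * (T - t₀) ^ (-(m * a - m * θ₂))) →
      ∃ M : ℝ≥0∞, M ≠ ⊤ ∧ ∀ t, (t₀ + T) / 2 < t → t < T →
        (∀ᵐ x, ENNReal.ofReal (u x t) ≤ M) ∧ (∀ᵐ x, ENNReal.ofReal (v x t) ≤ M) := by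
  obtain ⟨C₁, hC₁, H₁⟩ := heat_uloc N r₁ one_pos le_rfl (by simpa using hr₁)
  obtain ⟨C₂, hC₂, H₂⟩ := heat_uloc N r₂ hm hm1 hr₂
  have hd₁ : 0 < 1 - θ₁ * κ := by linarith
  have hd₂ : 0 < 1 - θ₂ * κ := by linarith
  have hθ₁0 : 0 ≤ θ₁ := by rw [hθ₁]; positivity
  have hθ₂0 : 0 ≤ θ₂ := by rw [hθ₂]; positivity
  obtain ⟨ε, hε, hεB⟩ := eps_aux C₁ C₂ (1 - θ₁ * κ) (1 - θ₂ * κ)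
    (2 ^ (p + q) * 2 ^ κ) hm hκ
  refine ⟨ε, hε, fun T u₀ v₀ u v hu₀ hv₀ hmin t₀ ht₀ ht₀T hU hV => ?_⟩
  have hδ : 0 < T - t₀ := sub_pos.2 ht₀T
  obtain ⟨hu, hv, hum, hvm, -, -⟩ := hmin.1.1
  have hums : Measurable (fun x => u x t₀) := hum.comp (measurable_id.prodMk measurable_const)
  have hvms : Measurable (fun x => v x t₀) := hvm.comp (measurable_id.prodMk measurable_const)
  have G₁ := H₁ _ _ (T - t₀) hums (fun x => hu x t₀) (by positivity) hδ hU
  have G₂ := H₂ _ _ (T - t₀) hvms (fun x => hv x t₀) (by positivity) hδ hV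
  simp only [div_one, Real.rpow_one, ← hθ₁] at G₁
  rw [← hθ₂] at G₂
  set w₀ : Euc N → ℝ≥0∞ := fun x => ENNReal.ofReal (u x t₀) + ENNReal.ofReal (v x t₀ ^ (1 / m))
    with hw₀
  have hw₀m : Measurable w₀ := hums.ennreal_ofReal.add (hvms.pow_const _).ennreal_ofReal
  set Z : ℝ → ℝ≥0∞ := fun s =>
    ENNReal.ofReal ((C₁ * ε) * (T - t₀) ^ (-a + θ₁) * (s - t₀) ^ (-θ₁)) +
    ENNReal.ofReal ((C₂ * ε ^ (1 / m)) * (T - t₀) ^ (-a + θ₂) * (s - t₀) ^ (-θ₂)) with hZ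
  have hZm₁ : Measurable fun s : ℝ =>
    ENNReal.ofReal ((C₁ * ε) * (T - t₀) ^ (-a + θ₁) * (s - t₀) ^ (-θ₁)) := by fun_prop
  have hZm : Measurable Z := by rw [hZ]; fun_prop
  have hbd : ∀ s, t₀ < s → s < T → ∀ x, hE N (s - t₀) w₀ x ≤ Z s := by
    intro s hs hsT x
    rw [hw₀, hE_add hums.ennreal_ofReal]
    refine add_le_add ((G₁ (s - t₀) (sub_pos.2 hs) (by linarith) x).trans (le_of_eq ?_))
      ((G₂ (s - t₀) (sub_pos.2 hs) (by linarith) x).trans (le_of_eq ?_))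
    · congr 1
      rw [show -(a - θ₁) = -a + θ₁ by ring]
      ring
    · congr 1
      rw [Real.mul_rpow hε.le (by positivity), ← Real.rpow_mul hδ.le,
        show -(m * a - m * θ₂) * (1 / m) = -a + θ₂ by field_simp; ring]
      ring
  have hI : ∫⁻ s in Set.Ioo t₀ T, Z s ^ κ ≤ ENNReal.ofReal (2 ^ κ *
      ((C₁ * ε) ^ κ / (1 - θ₁ * κ) + (C₂ * ε ^ (1 / m)) ^ κ / (1 - θ₂ * κ))) := by
    calc ∫⁻ s in Set.Ioo t₀ T, Z s ^ κ
        ≤ ∫⁻ s in Set.Ioo t₀ T, 2 ^ κ *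
          (ENNReal.ofReal ((C₁ * ε) * (T - t₀) ^ (-a + θ₁) * (s - t₀) ^ (-θ₁)) ^ κ +
          ENNReal.ofReal ((C₂ * ε ^ (1 / m)) * (T - t₀) ^ (-a + θ₂) * (s - t₀) ^ (-θ₂)) ^ κ) :=
          lintegral_mono fun s => add_rpow_le_aux κ hκ _ _
      _ = _ := by
          rw [lintegral_const_mul' _ _ (ENNReal.rpow_ne_top_of_nonneg hκ.le (by simp)),
            lintegral_add_left (hZm₁.pow_const κ),
            int_lem hκ hθκ₁ haκ (by positivity) ht₀T, int_lem hκ hθκ₂ haκ (by positivity) ht₀T,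
            ← ENNReal.ofReal_add (by positivity) (by positivity),
            ENNReal.ofReal_mul (by positivity), ← ENNReal.ofReal_rpow_of_pos two_pos]
          simp
  have hI' : ∀ e : ℝ, 0 ≤ e → e ≤ p + q → 2 ^ e * ∫⁻ s in Set.Ioo t₀ T, Z s ^ κ ≤ 1 := by
    intro e he hepq
    calc (2 : ℝ≥0∞) ^ e * ∫⁻ s in Set.Ioo t₀ T, Z s ^ κ
        ≤ 2 ^ (p + q) * ENNReal.ofReal (2 ^ κ *
          ((C₁ * ε) ^ κ / (1 - θ₁ * κ) + (C₂ * ε ^ (1 / m)) ^ κ / (1 - θ₂ * κ))) := by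
          gcongr
          norm_num
      _ = ENNReal.ofReal (2 ^ (p + q) * 2 ^ κ *
          ((C₁ * ε) ^ κ / (1 - θ₁ * κ) + (C₂ * ε ^ (1 / m)) ^ κ / (1 - θ₂ * κ))) := by
          rw [mul_assoc ((2 : ℝ) ^ (p + q)), ENNReal.ofReal_mul (p := (2 : ℝ) ^ (p + q)) (by positivity),
            ← ENNReal.ofReal_rpow_of_pos two_pos]
          simp
      _ ≤ 1 := ENNReal.ofReal_le_one.2 hεB.le
  have hsuper := itr_le_super (N := N) hp hq hm hm1 hκ h1 h2 (f := fun y => ENNReal.ofReal (u₀ y))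
    (g := fun y => ENNReal.ofReal (v₀ y)) hu₀.ennreal_ofReal hv₀.ennreal_ofReal (t₀ := t₀) (T := T)
    ht₀ hw₀m ?_ ?_ hZm hbd (hI' p hp.le (by linarith)) (hI' q hq.le (by linarith))
  · set t₁ := (t₀ + T) / 2 with ht₁
    have hZtop : Z t₁ ≠ ⊤ := ENNReal.add_ne_top.2 ⟨ENNReal.ofReal_ne_top, ENNReal.ofReal_ne_top⟩
    refine ⟨2 * Z t₁ + 2 * Z t₁ ^ m, ENNReal.add_ne_top.2 ⟨ENNReal.mul_ne_top (by simp) hZtop,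
      ENNReal.mul_ne_top (by simp) (ENNReal.rpow_ne_top_of_nonneg hm.le hZtop)⟩, ?_⟩
    intro t ht htT
    have ht₀t : t₀ < t := by rw [ht₁] at ht; linarith
    have hpos : 0 < t₁ - t₀ := by rw [ht₁]; linarith
    have hanti : Z t ≤ Z t₁ := by
      rw [hZ]
      refine add_le_add (ENNReal.ofReal_le_ofReal ?_) (ENNReal.ofReal_le_ofReal ?_)
      · refine mul_le_mul_of_nonneg_left ?_ (by positivity)
        exact Real.rpow_le_rpow_of_nonpos hpos (by linarith) (by linarith)
      · refine mul_le_mul_of_nonneg_left ?_ (by positivity)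
        exact Real.rpow_le_rpow_of_nonpos hpos (by linarith) (by linarith)
    have hzle : ∀ x, hE N (t - t₀) w₀ x ≤ Z t₁ := fun x => (hbd t ht₀t htT x).trans hanti
    obtain ⟨k1, k2⟩ := min_le_itr hp hq hu₀ hv₀ hmin t (ht₀.trans ht₀t) htT
    constructor
    · filter_upwards [k1] with x hx
      refine hx.trans (iSup_le fun n => ((hsuper n t ht₀t htT x).1.trans ?_))
      refine le_trans ?_ le_self_add
      gcongr
      exact hzle x
    · filter_upwards [k2] with x hx
      refine hx.trans (iSup_le fun n => ((hsuper n t ht₀t htT x).2.trans ?_))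
      refine le_trans ?_ le_add_self
      gcongr
      exact hzle x
  · intro n
    filter_upwards [(itr_le_sol hp.le hq.le hmin.1 n t₀ ht₀ ht₀T).1] with x hx
    exact hx.trans le_self_add
  · intro n
    filter_upwards [(itr_le_sol hp.le hq.le hmin.1 n t₀ ht₀ ht₀T).2] with x hx
    refine hx.trans ?_
    have e : ENNReal.ofReal (v x t₀) = ENNReal.ofReal (v x t₀ ^ (1 / m)) ^ m := by
      rw [ENNReal.ofReal_rpow_of_nonneg (Real.rpow_nonneg (hv x t₀) _) hm.le,
        ← Real.rpow_mul (hv x t₀), one_div_mul_cancel hm.ne', Real.rpow_one]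
    rw [e]
    exact ENNReal.rpow_le_rpow le_add_self hm.le

lemma scale_aux {δ e ε : ℝ} (hδ : 0 < δ) {X : ℝ≥0∞}
    (h : ENNReal.ofReal (δ ^ e) * X ≤ ENNReal.ofReal ε) :
    X ≤ ENNReal.ofReal (ε * δ ^ (-e)) := by
  have hpos : 0 < δ ^ e := by positivity
  rw [mul_comm] at h
  have h2 := (ENNReal.le_div_iff_mul_le (Or.inl (by simpa using hpos))
    (Or.inl ENNReal.ofReal_ne_top)).2 h
  rw [← ENNReal.ofReal_div_of_pos hpos, div_eq_mul_inv, ← Real.rpow_neg hδ.le] at h2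
  exact h2

lemma theta_aux {n r : ℝ≥0∞} {x : ℝ} (hx : 0 < x) (h : ENNReal.ofReal x < r) :
    r⁻¹.toReal * x < 1 := by
  by_cases hr : r = ⊤
  · simp [hr]
  · have h1 : x < r.toReal := by
      rwa [← ENNReal.ofReal_lt_iff_lt_toReal hx.le hr]
    rw [ENNReal.toReal_inv, inv_mul_lt_iff₀ (hx.trans h1)]
    linarith

lemma main_q_le_p (N : ℕ) (hN : 1 ≤ N) (p q : ℝ) (hp : 0 ≤ p) (hq : 0 ≤ q)
    (hqp : q ≤ p)
    (hpq : 1 < p * q) (r₁s r₂s : ℝ)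
    (hr₁def : r₁s = (N : ℝ) / 2 * ((p * q - 1) / (p + 1)))
    (hr₂def : r₂s = (N : ℝ) / 2 * ((p * q - 1) / (q + 1)))
    (lstar : ℝ) (hl : 1 ≤ lstar) (hlmin : 1 ≤ lstar * min r₁s r₂s)
    (T : ℝ) (hT : 0 < T) (u₀ v₀ : Euc N → ℝ)
    (hu₀m : Measurable u₀) (hv₀m : Measurable v₀)
    (u v : Euc N → ℝ → ℝ)
    (hmin : IsMinSolSys N p q u₀ v₀ (ENNReal.ofReal T) u v)
    (hblow : Filter.limsup (fun t : ℝ =>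
        essSup (fun x => ENNReal.ofReal (u x t)) (volume : Measure (Euc N)) +
          essSup (fun x => ENNReal.ofReal (v x t)) (volume : Measure (Euc N)))
        (nhdsWithin T (Set.Iio T)) = ⊤) :
    ∀ r₁ r₂ : ℝ≥0∞, ENNReal.ofReal (lstar * r₁s) < r₁ → ENNReal.ofReal (lstar * r₂s) < r₂ →
      ∃ c₁ : ℝ, 0 < c₁ ∧
        ENNReal.ofReal c₁ ≤ Filter.liminf (fun t : ℝ =>
          ENNReal.ofReal ((T - t) ^ ((N : ℝ) / 2 * (1 / r₁s - r₁⁻¹.toReal))) *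
              ulocNorm N r₁ (Real.sqrt (T - t)) (fun x => u x t) +
            ENNReal.ofReal ((T - t) ^ ((N : ℝ) / 2 * (1 / r₂s - r₂⁻¹.toReal))) *
              ulocNorm N r₂ (Real.sqrt (T - t)) (fun x => v x t))
          (nhdsWithin T (Set.Iio T)) := by
  intro r₁ r₂ hr₁ hr₂
  have hp0 : 0 < p := by
    rcases hp.eq_or_lt with h | h
    · rw [← h] at hpq; linarith
    · exact h
  have hq0 : 0 < q := by
    rcases hq.eq_or_lt with h | h
    · rw [← h] at hpq; linarith
    · exact h
  have hNpos : (0 : ℝ) < N := by exact_mod_cast hN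
  have hpq0 : 0 < p * q - 1 := by linarith
  have hr₁pos : 0 < r₁s := by rw [hr₁def]; positivity
  have hr₂pos : 0 < r₂s := by rw [hr₂def]; positivity
  have hl0 : 0 < lstar := by linarith
  set m : ℝ := (q + 1) / (p + 1) with hmdef
  set κ : ℝ := (p * q - 1) / (p + 1) with hκdef
  set a : ℝ := (p + 1) / (p * q - 1) with hadef
  have hm : 0 < m := by positivity
  have hm1 : m ≤ 1 := by rw [hmdef, div_le_one (by linarith)]; linarith
  have hκ : 0 < κ := by positivity
  have h1 : m * p = κ + 1 := by rw [hmdef, hκdef]; field_simp; ring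
  have h2 : q = κ + m := by rw [hmdef, hκdef]; field_simp; ring
  have haκ : a * κ = 1 := by rw [hadef, hκdef]; field_simp
  have hmr : m * r₂s = r₁s := by rw [hr₁def, hr₂def, hmdef, hκdef]; field_simp
  have hl1 : 1 ≤ lstar * r₁s := hlmin.trans (by gcongr; exact min_le_left _ _)
  have hr₁1 : 1 < r₁ := (ENNReal.one_le_ofReal.2 hl1).trans_lt hr₁
  have hmm : ENNReal.ofReal (lstar * r₁s) < ENNReal.ofReal m * r₂ := by
    have e : ENNReal.ofReal (lstar * r₁s) = ENNReal.ofReal m * ENNReal.ofReal (lstar * r₂s) := by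
      rw [← ENNReal.ofReal_mul hm.le]
      congr 1
      rw [← hmr]; ring
    rw [e]
    exact (ENNReal.mul_lt_mul_iff_right (by simpa using hm) ENNReal.ofReal_ne_top).2 hr₂
  have hr₂1 : 1 < ENNReal.ofReal m * r₂ := (ENNReal.one_le_ofReal.2 hl1).trans_lt hmm
  have hNκ : (N : ℝ) / 2 * κ = r₁s := hr₁def.symm
  have hT1 : (N : ℝ) / 2 * r₁⁻¹.toReal * κ < 1 := by
    have := theta_aux (n := 0) hr₁pos (lt_of_le_of_lt (ENNReal.ofReal_le_ofReal (by nlinarith)) hr₁)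
    rw [← hNκ] at this
    linarith
  have hT2 : (N : ℝ) / 2 * r₂⁻¹.toReal / m * κ < 1 := by
    have := theta_aux (n := 0) hr₂pos (lt_of_le_of_lt (ENNReal.ofReal_le_ofReal (by nlinarith)) hr₂)
    have e : r₂s = (N : ℝ) / 2 * κ / m := by
      rw [hNκ, ← hmr]; field_simp
    rw [e] at this
    have e2 : (N : ℝ) / 2 * r₂⁻¹.toReal / m * κ = r₂⁻¹.toReal * ((N : ℝ) / 2 * κ / m) := by ring
    rw [e2]; exact this
  obtain ⟨ε, hε, H⟩ := core (N := N) hp0 hq0 hm hm1 hκ h1 h2 haκ hr₁1 hr₂1 rfl rfl hT1 hT2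
  refine ⟨ε, hε, ?_⟩
  by_contra hcon
  have hfreq := Filter.frequently_lt_of_liminf_lt (by isBoundedDefault) (not_le.1 hcon)
  have hev : ∀ᶠ t in nhdsWithin T (Set.Iio T), 0 < t ∧ t < T := by
    filter_upwards [Ioo_mem_nhdsLT hT] with t ht
    exact ht
  obtain ⟨t₀, hlt, ht₀, ht₀T⟩ := (hfreq.and_eventually hev).exists
  have hδ : 0 < T - t₀ := sub_pos.2 ht₀T
  have E1 : (N : ℝ) / 2 * (1 / r₁s - r₁⁻¹.toReal) = a - (N : ℝ) / 2 * r₁⁻¹.toReal := by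
    rw [hr₁def, hadef, hκdef]; field_simp
  have E2 : (N : ℝ) / 2 * (1 / r₂s - r₂⁻¹.toReal) =
      m * a - m * ((N : ℝ) / 2 * r₂⁻¹.toReal / m) := by
    rw [hr₂def, hadef, hmdef]; field_simp
  have hA := scale_aux hδ (le_self_add.trans hlt.le)
  have hB := scale_aux hδ (le_add_self.trans hlt.le)
  rw [E1] at hA
  rw [E2] at hB
  obtain ⟨M, hM, hMb⟩ := H T u₀ v₀ u v hu₀m hv₀m hmin t₀ ht₀ ht₀T hA hB
  have hle : Filter.limsup (fun t : ℝ =>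
        essSup (fun x => ENNReal.ofReal (u x t)) (volume : Measure (Euc N)) +
          essSup (fun x => ENNReal.ofReal (v x t)) (volume : Measure (Euc N)))
        (nhdsWithin T (Set.Iio T)) ≤ M + M := by
    refine Filter.limsup_le_of_le (by isBoundedDefault) ?_
    filter_upwards [Ioo_mem_nhdsLT (show (t₀ + T) / 2 < T by linarith)] with t ht
    obtain ⟨k1, k2⟩ := hMb t ht.1 ht.2
    exact add_le_add (essSup_le_of_ae_le _ k1) (essSup_le_of_ae_le _ k2)
  rw [hblow] at hle
  exact ENNReal.add_ne_top.2 ⟨hM, hM⟩ (top_le_iff.1 hle)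

lemma minSol_swap {N : ℕ} {p q : ℝ} {u₀ v₀ : Euc N → ℝ} {T : ℝ≥0∞} {u v : Euc N → ℝ → ℝ}
    (h : IsMinSolSys N p q u₀ v₀ T u v) : IsMinSolSys N q p v₀ u₀ T v u := by
  have hs : ∀ {p q : ℝ} {u₀ v₀ : Euc N → ℝ} {u v : Euc N → ℝ → ℝ},
      IsSolSys N p q u₀ v₀ T u v → IsSolSys N q p v₀ u₀ T v u := by
    intro p q u₀ v₀ u v h
    obtain ⟨⟨h1, h2, h3, h4, h5, h6⟩, h7⟩ := h
    exact ⟨⟨h2, h1, h4, h3, h6, h5⟩, fun t ht htT => (h7 t ht htT).symm⟩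
  exact ⟨hs h.1, fun u' v' h' t ht htT => (h.2 v' u' (hs h') t ht htT).symm⟩


/-- Theorem 3.3 (i): lower `liminf` estimate of the blow-up rate of the
minimal solution of the system (S) in uniformly local weak Lebesgue norms. -/
theorem statement16 (N : ℕ) (hN : 1 ≤ N) (p q : ℝ) (hp : 0 ≤ p) (hq : 0 ≤ q)
    (hpq : 1 < p * q) (r₁s r₂s : ℝ)
    (hr₁def : r₁s = (N : ℝ) / 2 * ((p * q - 1) / (p + 1)))
    (hr₂def : r₂s = (N : ℝ) / 2 * ((p * q - 1) / (q + 1)))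
    (lstar : ℝ) (hl : 1 ≤ lstar) (hlmin : 1 ≤ lstar * min r₁s r₂s)
    (T : ℝ) (hT : 0 < T) (u₀ v₀ : Euc N → ℝ)
    (hu₀m : Measurable u₀) (hv₀m : Measurable v₀)
    (hu₀ : ∀ x, 0 ≤ u₀ x) (hv₀ : ∀ x, 0 ≤ v₀ x)
    (u v : Euc N → ℝ → ℝ)
    (hmin : IsMinSolSys N p q u₀ v₀ (ENNReal.ofReal T) u v)
    (hblow : Filter.limsup (fun t : ℝ =>
        essSup (fun x => ENNReal.ofReal (u x t)) (volume : Measure (Euc N)) +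
          essSup (fun x => ENNReal.ofReal (v x t)) (volume : Measure (Euc N)))
        (nhdsWithin T (Set.Iio T)) = ⊤) :
    ∀ r₁ r₂ : ℝ≥0∞, ENNReal.ofReal (lstar * r₁s) < r₁ → ENNReal.ofReal (lstar * r₂s) < r₂ →
      ∃ c₁ : ℝ, 0 < c₁ ∧
        ENNReal.ofReal c₁ ≤ Filter.liminf (fun t : ℝ =>
          ENNReal.ofReal ((T - t) ^ ((N : ℝ) / 2 * (1 / r₁s - r₁⁻¹.toReal))) *
              ulocNorm N r₁ (Real.sqrt (T - t)) (fun x => u x t) +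
            ENNReal.ofReal ((T - t) ^ ((N : ℝ) / 2 * (1 / r₂s - r₂⁻¹.toReal))) *
              ulocNorm N r₂ (Real.sqrt (T - t)) (fun x => v x t))
          (nhdsWithin T (Set.Iio T)) := by
  rcases le_total q p with hqp | hqp
  · exact main_q_le_p N hN p q hp hq hqp hpq r₁s r₂s hr₁def hr₂def lstar hl hlmin T hT u₀ v₀
      hu₀m hv₀m u v hmin hblow
  · intro r₁ r₂ hr₁ hr₂
    have hb : Filter.limsup (fun t : ℝ =>
        essSup (fun x => ENNReal.ofReal (v x t)) (volume : Measure (Euc N)) +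
          essSup (fun x => ENNReal.ofReal (u x t)) (volume : Measure (Euc N)))
        (nhdsWithin T (Set.Iio T)) = ⊤ := by
      rw [← hblow]
      congr 1
      ext t
      exact add_comm _ _
    obtain ⟨c, hc, h⟩ := main_q_le_p N hN q p hq hp hqp (by rwa [mul_comm]) r₂s r₁s
      (by rw [hr₂def, mul_comm p q]) (by rw [hr₁def, mul_comm p q]) lstar hl
      (by rwa [min_comm]) T hT v₀ u₀ hv₀m hu₀m v u (minSol_swap hmin) hb r₂ r₁ hr₂ hr₁
    refine ⟨c, hc, h.trans (le_of_eq ?_)⟩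
    congr 1
    ext t
    exact add_comm _ _
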